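/- arXiv:1405.1702 — 3 statements merged into one kernel-verified Lean document; each statement's English description precedes it below -/
import Mathlib

section
/- Let (G_n) be a sequence of connected d-regular simple graphs on n vertices with d = d(n) → ∞ and parameters ε = ε(n) ∈ (0,1) with ε(n)·log d → ∞, satisfying properties P1, P2 and P3. Let t* = n·ln d. Then for any sequence of starting vertices u = u(n), any t = t(n) with t ≥ (1+ε)t*, and every constant δ > 0, the probability that the subgraph of G_n induced by the vertices not visited by the first t steps of the simple random walk started at u contains a connected component with at least δ·log n vertices tends to 0 as n → ∞. -/
open Finset Filter

noncomputable section
open scoped Classical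

variable {V : Type*} [Fintype V] [DecidableEq V]

/-- Transition matrix of the simple random walk on a `d`-regular graph `G`:
from `u` the walk moves to a uniformly random neighbour. -/
def simpleStep (G : SimpleGraph V) (d : ℕ) : Matrix V V ℝ :=
  Matrix.of fun u v => if G.Adj u v then ((d : ℝ))⁻¹ else 0

/-- Transition matrix of the lazy random walk `M = (1/2)(I + A/d)`. -/
def lazyStep (G : SimpleGraph V) (d : ℕ) : Matrix V V ℝ :=
  Matrix.of fun u v =>
    (if u = v then (2 : ℝ)⁻¹ else 0) + (2 : ℝ)⁻¹ * (if G.Adj u v then ((d : ℝ))⁻¹ else 0)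

/-- Probability that the first `t` steps of the Markov chain with transition
matrix `M` started at `u` form a trajectory satisfying `E`:  the sum, over all
paths realizing the event, of the product of the transition probabilities. -/
def walkProb (M : Matrix V V ℝ) (u : V) (t : ℕ)
    (E : (Fin (t + 1) → V) → Prop) : ℝ :=
  ∑ p : Fin (t + 1) → V,
    if p 0 = u ∧ E p then ∏ i : Fin t, M (p i.castSucc) (p i.succ) else 0

/-- The mixing time `T = min { t ≥ 1 : |M^t x y - 1/n| ≤ n⁻³ for all x,y }`. -/
def mixingTime (G : SimpleGraph V) (d : ℕ) : ℕ :=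
  sInf {T : ℕ | 1 ≤ T ∧ ∀ x y : V,
    |((lazyStep G d) ^ T) x y - ((Fintype.card V : ℝ))⁻¹| ≤ (((Fintype.card V : ℝ)) ^ 3)⁻¹}

/-- Property P1: the second largest eigenvalue of the lazy walk matrix is at
most `1 - g`, stated via the Rayleigh quotient on the orthogonal complement of
the constant (top) eigenvector. -/
def SpectralGapLB (G : SimpleGraph V) (d : ℕ) (g : ℝ) : Prop :=
  ∀ x : V → ℝ, (∑ v : V, x v) = 0 →
    (∑ u : V, ∑ v : V, x u * lazyStep G d u v * x v) ≤ (1 - g) * ∑ v : V, x v ^ 2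

/-- Property P3 with constant `ρ₂`: for vertices `u,v` at distance at most
`d^ε`, the number of neighbours `w` of `v` with `dist w u ≤ dist u v` is at
most `ρ₂ · dist u v`. -/
def PropP3 (G : SimpleGraph V) (d : ℕ) (ε ρ₂ : ℝ) : Prop :=
  ∀ u v : V, (G.dist u v : ℝ) ≤ (d : ℝ) ^ ε →
    (((univ : Finset V).filter fun w => G.Adj v w ∧ G.dist w u ≤ G.dist u v).card : ℝ) ≤
      ρ₂ * (G.dist u v : ℝ)

/-- The number of edges of `G` with both endpoints in `S`. -/
def edgesInside (G : SimpleGraph V) (S : Finset V) : ℕ :=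
  ((S ×ˢ S).filter fun p => G.Adj p.1 p.2).card / 2

/-- The set of vertices of `G` not visited by the trajectory `p` at any step
`s` with `t₀ ≤ s` contains a connected (in the induced subgraph) subset of at
least `K` vertices; equivalently, the subgraph induced by this vacant set has a
connected component with at least `K` vertices. -/
def bigVacantComponent (G : SimpleGraph V) {t : ℕ} (p : Fin (t + 1) → V)
    (t₀ : ℕ) (K : ℝ) : Prop :=
  ∃ S : Finset V, (∀ v ∈ S, ∀ s : Fin (t + 1), t₀ ≤ (s : ℕ) → p s ≠ v) ∧
    (G.induce (S : Set V)).Connected ∧ K ≤ (S.card : ℝ)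



/-! ### Linear algebra -/
set_option linter.unusedSectionVars false
set_option linter.unusedVariables false
namespace VS
open Matrix

lemma quad_expand (M : Matrix V V ℝ) (x : V → ℝ) :
    x ⬝ᵥ M *ᵥ x = ∑ u, ∑ v, x u * M u v * x v := by
  simp only [dotProduct, mulVec, Finset.mul_sum, mul_assoc]

lemma quad_abs (M : Matrix V V ℝ) (h0 : ∀ u v, 0 ≤ M u v) (x : V → ℝ) :
    -(x ⬝ᵥ M *ᵥ x) ≤ (fun v => |x v|) ⬝ᵥ M *ᵥ (fun v => |x v|) := by
  rw [quad_expand, quad_expand, ← Finset.sum_neg_distrib]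
  refine Finset.sum_le_sum fun u _ => ?_
  rw [← Finset.sum_neg_distrib]
  refine Finset.sum_le_sum fun v _ => ?_
  have : |x u * M u v * x v| = |x u| * M u v * |x v| := by
    rw [abs_mul, abs_mul, abs_of_nonneg (h0 u v)]
  rw [← this]
  exact neg_le_abs _

lemma symm_dot (M : Matrix V V ℝ) (hM : ∀ u v, M u v = M v u) (x y : V → ℝ) :
    x ⬝ᵥ M *ᵥ y = y ⬝ᵥ M *ᵥ x := by
  simp only [dotProduct, mulVec, Finset.mul_sum]
  rw [Finset.sum_comm]
  refine Finset.sum_congr rfl fun u _ => Finset.sum_congr rfl fun v _ => ?_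
  rw [hM u v]; ring

lemma bilin_bound (M : Matrix V V ℝ) (hM : ∀ u v, M u v = M v u) (h0 : ∀ u v, 0 ≤ M u v)
    (X : Finset V) (θ : ℝ)
    (hQ : ∀ x : V → ℝ, (∀ v, v ∉ X → x v = 0) → x ⬝ᵥ M *ᵥ x ≤ θ * (x ⬝ᵥ x))
    (f g : V → ℝ) (hf : ∀ v, v ∉ X → f v = 0) (hg : ∀ v, v ∉ X → g v = 0) :
    f ⬝ᵥ M *ᵥ g ≤ θ / 2 * (f ⬝ᵥ f + g ⬝ᵥ g) := by
  have h1 := hQ (f + g) (fun v hv => by simp [hf v hv, hg v hv])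
  have h2 := hQ (fun v => |(f - g) v|) (fun v hv => by simp [hf v hv, hg v hv])
  have h3 := quad_abs M h0 (f - g)
  have h4 : (fun v => |(f - g) v|) ⬝ᵥ (fun v => |(f - g) v|) = (f - g) ⬝ᵥ (f - g) := by
    simp only [dotProduct, abs_mul_abs_self]
  rw [h4] at h2
  have h5 := symm_dot M hM f g
  have h6 := dotProduct_comm f g
  simp only [mulVec_add, mulVec_sub, add_dotProduct, dotProduct_add, sub_dotProduct,
    dotProduct_sub] at h1 h2 h3
  rw [← h5, ← h6] at *
  linarith

lemma step_bound (M : Matrix V V ℝ) (hM : ∀ u v, M u v = M v u) (h0 : ∀ u v, 0 ≤ M u v)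
    (X : Finset V) (θ : ℝ) (hθ : 0 < θ)
    (hQ : ∀ x : V → ℝ, (∀ v, v ∉ X → x v = 0) → x ⬝ᵥ M *ᵥ x ≤ θ * (x ⬝ᵥ x))
    (f g : V → ℝ) (hf : ∀ v, v ∉ X → f v = 0) (hg : ∀ v, v ∉ X → g v = 0)
    (hfg : ∀ v, v ∈ X → f v = (M *ᵥ g) v) :
    f ⬝ᵥ f ≤ θ ^ 2 * (g ⬝ᵥ g) := by
  have h1 := bilin_bound M hM h0 X θ hQ f (θ • g) hf (fun v hv => by simp [hg v hv])
  have h2 : f ⬝ᵥ M *ᵥ g = f ⬝ᵥ f := by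
    simp only [dotProduct]
    refine Finset.sum_congr rfl fun v _ => ?_
    by_cases hv : v ∈ X
    · rw [hfg v hv]
    · rw [hf v hv]; simp
  simp only [mulVec_smul, dotProduct_smul, smul_dotProduct, smul_eq_mul] at h1
  rw [h2] at h1
  have h3 : θ * (f ⬝ᵥ f) ≤ θ * (θ ^ 2 * (g ⬝ᵥ g)) := by nlinarith
  exact le_of_mul_le_mul_left h3 hθ

/-- `bseq M S j = M ^ j 1_S`. -/
def bseq (M : Matrix V V ℝ) (S : Finset V) : ℕ → V → ℝ
  | 0 => fun v => if v ∈ S then 1 else 0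
  | (j + 1) => M *ᵥ bseq M S j

lemma bseq_nonneg (M : Matrix V V ℝ) (h0 : ∀ u v, 0 ≤ M u v) (S : Finset V) (j : ℕ) (v : V) :
    0 ≤ bseq M S j v := by
  induction j generalizing v with
  | zero => simp only [bseq]; split_ifs <;> norm_num
  | succ j ih =>
    simp only [bseq, mulVec, dotProduct]
    exact Finset.sum_nonneg fun w _ => mul_nonneg (h0 _ _) (ih w)

lemma bseq_sum (M : Matrix V V ℝ) (hM : ∀ u v, M u v = M v u) (h1 : ∀ u, ∑ v, M u v = 1)
    (S : Finset V) (j : ℕ) : ∑ v, bseq M S j v = S.card := by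
  induction j with
  | zero => simp [bseq]
  | succ j ih =>
    simp only [bseq, mulVec, dotProduct]
    rw [Finset.sum_comm, ← ih]
    refine Finset.sum_congr rfl fun v _ => ?_
    rw [← Finset.sum_mul]
    have : ∑ w, M w v = 1 := by rw [← h1 v]; exact Finset.sum_congr rfl fun w _ => hM w v
    rw [this, one_mul]

lemma bseq_zero_dot (M : Matrix V V ℝ) (S : Finset V) :
    bseq M S 0 ⬝ᵥ bseq M S 0 = S.card := by
  simp [dotProduct, bseq]

lemma cs (x y : V → ℝ) : (x ⬝ᵥ y) ^ 2 ≤ (x ⬝ᵥ x) * (y ⬝ᵥ y) := by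
  have := Finset.sum_mul_sq_le_sq_mul_sq Finset.univ x y
  simpa only [dotProduct, sq] using this

lemma dot_self_nonneg (x : V → ℝ) : 0 ≤ x ⬝ᵥ x :=
  Finset.sum_nonneg fun v _ => mul_self_nonneg _

lemma bseq_bound (M : Matrix V V ℝ) (hM : ∀ u v, M u v = M v u) (h0 : ∀ u v, 0 ≤ M u v)
    (S X : Finset V) (θ : ℝ) (hθ : 0 < θ) (J : ℕ)
    (hQ : ∀ x : V → ℝ, (∀ v, v ∉ X → x v = 0) → x ⬝ᵥ M *ᵥ x ≤ θ * (x ⬝ᵥ x))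
    (hsupp : ∀ j ≤ J, ∀ v, v ∉ X → bseq M S j v = 0) (j : ℕ) (hj : j ≤ J) :
    bseq M S j ⬝ᵥ bseq M S j ≤ (θ ^ j) ^ 2 * S.card := by
  induction j with
  | zero => rw [bseq_zero_dot]; simp
  | succ j ih =>
    have h1 := step_bound M hM h0 X θ hθ hQ (bseq M S (j+1)) (bseq M S j) (hsupp _ hj)
      (hsupp _ (by omega)) (fun v _ => rfl)
    have h2 := ih (by omega)
    calc _ ≤ _ := h1
      _ ≤ θ ^ 2 * ((θ ^ j) ^ 2 * S.card) := by gcongr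
      _ = _ := by ring

lemma bseq_dot_zero (M : Matrix V V ℝ) (S : Finset V) (θ : ℝ) (hθ : 0 < θ) (j : ℕ)
    (h : bseq M S j ⬝ᵥ bseq M S j ≤ (θ ^ j) ^ 2 * S.card) :
    bseq M S j ⬝ᵥ bseq M S 0 ≤ θ ^ j * S.card := by
  have h1 := cs (bseq M S j) (bseq M S 0)
  rw [bseq_zero_dot] at h1
  have h2 : (bseq M S j ⬝ᵥ bseq M S 0) ^ 2 ≤ (θ ^ j * S.card) ^ 2 := by
    calc _ ≤ _ := h1
      _ ≤ (θ ^ j) ^ 2 * S.card * S.card := by gcongr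
      _ = _ := by ring
  exact le_of_sq_le_sq h2 (by positivity) 

/-- Dirichlet form. -/
def DE (M : Matrix V V ℝ) (x y : V → ℝ) : ℝ := x ⬝ᵥ y - x ⬝ᵥ M *ᵥ y

lemma DE_const (M : Matrix V V ℝ) (hM : ∀ u v, M u v = M v u) (h1 : ∀ u, ∑ v, M u v = 1)
    (f : V → ℝ) (a : ℝ) : DE M (f - fun _ => a) (f - fun _ => a) = DE M f f := by
  have hc : M *ᵥ (fun _ => a) = fun _ => a := by
    ext v
    simp only [mulVec, dotProduct]
    rw [← Finset.sum_mul, h1, one_mul]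
  have h2 := symm_dot M hM f (fun _ => a)
  rw [hc] at h2
  simp only [DE, mulVec_sub, sub_dotProduct, dotProduct_sub, hc]
  have := dotProduct_comm f (fun _ => a)
  linarith

lemma DE_cs (M : Matrix V V ℝ) (hM : ∀ u v, M u v = M v u)
    (hpsd : ∀ x, 0 ≤ DE M x x) (f ψ : V → ℝ) (e : ℝ) (he : 0 < e) (hψ : DE M ψ ψ ≤ e) :
    DE M f ψ ^ 2 ≤ e * DE M f f := by
  set c := DE M f ψ / e with hc
  have h1 := hpsd (f - c • ψ)
  have h2 : DE M (f - c • ψ) (f - c • ψ)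
      = DE M f f - 2 * c * DE M f ψ + c ^ 2 * DE M ψ ψ := by
    have h3 := symm_dot M hM f ψ
    have h4 := dotProduct_comm f ψ
    simp only [DE, mulVec_sub, sub_dotProduct, dotProduct_sub, mulVec_smul, dotProduct_smul,
      smul_dotProduct, smul_eq_mul]
    rw [← h3, ← h4]; ring
  rw [h2] at h1
  have h5 : c ^ 2 * DE M ψ ψ ≤ c ^ 2 * e := by gcongr
  have h6 : c * e = DE M f ψ := by rw [hc]; field_simp
  have h7 : 0 ≤ DE M f f - c * (c * e) := by
    have : c * DE M f ψ = c * (c * e) := by rw [h6]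
    nlinarith
  rw [← h6]
  nlinarith

lemma psd_of_gap (M : Matrix V V ℝ) (hM : ∀ u v, M u v = M v u) (h1 : ∀ u, ∑ v, M u v = 1)
    (γ : ℝ) (hgap : ∀ x : V → ℝ, ∑ v, x v = 0 → x ⬝ᵥ M *ᵥ x ≤ (1 - γ) * (x ⬝ᵥ x))
    (f : V → ℝ) (a : ℝ) (ha : ∑ v, f v = Fintype.card V * a) :
    γ * ((f - fun _ => a) ⬝ᵥ (f - fun _ => a)) ≤ DE M f f := by
  rw [← DE_const M hM h1 f a]
  have := hgap (f - fun _ => a) (by simp [ha])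
  unfold DE
  linarith

lemma numeric_core (N s a H E z γ κ θ τ T : ℝ) (hspos : 0 < s) (hγ : 0 < γ)
    (hH0 : 0 ≤ H) (hE0 : 0 ≤ E) (hθ' : 0 < 1 - θ) (hτ0 : 0 ≤ τ) (hτ1 : τ ≤ 1)
    (hτ : 2 * T ≤ γ * τ ^ 2) (hκ0 : 0 ≤ κ) (hκ : κ ≤ γ / 2) (hκN : κ * N ≤ s)
    (hmain : κ * (N + 2 * s / γ) ≤ s * (1 - τ) ^ 2 * (1 - θ))
    (hE1 : γ * H ≤ E) (hE2 : E < κ * (N * a ^ 2 + H))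
    (hz2 : z ^ 2 ≤ H * (T * s)) (hF : (a * s + z) ^ 2 ≤ s / (1 - θ) * E) : False := by
  have hH1 : γ / 2 * H ≤ s * a ^ 2 := by
    have : κ * H ≤ γ / 2 * H := by gcongr
    have : κ * N * a ^ 2 ≤ s * a ^ 2 := by gcongr
    nlinarith
  have hz3 : z ^ 2 ≤ (|a| * s * τ) ^ 2 := by
    rw [mul_pow, mul_pow, sq_abs]
    have e1 : H * (T * s) ≤ H * (γ * τ ^ 2 / 2 * s) := by
      gcongr; linarith
    have e2 : γ / 2 * H * (τ ^ 2 * s) ≤ s * a ^ 2 * (τ ^ 2 * s) := by gcongr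
    nlinarith
  have hz4 : |z| ≤ |a| * s * τ := by
    exact abs_le_of_sq_le_sq hz3 (by positivity)
  have hF2 : (|a| * s * (1 - τ)) ^ 2 ≤ (a * s + z) ^ 2 := by
    rw [← sq_abs (a * s + z)]
    have h1τ : 0 ≤ 1 - τ := by linarith
    refine pow_le_pow_left₀ (by positivity) ?_ 2
    have e1 : |a * s| ≤ |a * s + z| + |z| := by
      have := abs_sub (a * s + z) z
      simpa using this
    rw [abs_mul, abs_of_pos hspos] at e1
    linarith
  by_cases ha0 : a = 0
  · rw [ha0] at hH1 hE2
    have : H ≤ 0 := by nlinarith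
    have hH00 : H = 0 := le_antisymm this hH0
    rw [hH00] at hE2
    simp at hE2; linarith
  · have ha2 : 0 < a ^ 2 := by positivity
    have hH2 : H ≤ 2 * s / γ * a ^ 2 := by
      have e : 2 * s / γ * a ^ 2 = (s * a ^ 2) / (γ / 2) := by field_simp
      rw [e, le_div_iff₀ (by positivity)]; linarith
    have e1 : κ * (N * a ^ 2 + H) ≤ a ^ 2 * (κ * (N + 2 * s / γ)) := by
      have : κ * H ≤ κ * (2 * s / γ * a ^ 2) := by gcongr
      linarith
    have e2 : E < a ^ 2 * (s * (1 - τ) ^ 2 * (1 - θ)) := by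
      have : a ^ 2 * (κ * (N + 2 * s / γ)) ≤ a ^ 2 * (s * (1 - τ) ^ 2 * (1 - θ)) := by gcongr
      linarith
    have e3 : s / (1 - θ) * E < s / (1 - θ) * (a ^ 2 * (s * (1 - τ) ^ 2 * (1 - θ))) := by
      gcongr
    have e4 : s / (1 - θ) * (a ^ 2 * (s * (1 - τ) ^ 2 * (1 - θ))) = (|a| * s * (1 - τ)) ^ 2 := by
      rw [mul_pow, mul_pow, sq_abs]; field_simp
    linarith

theorem spectral_bound (M : Matrix V V ℝ) (hM : ∀ u v, M u v = M v u)
    (h0 : ∀ u v, 0 ≤ M u v) (h1 : ∀ u, ∑ v, M u v = 1)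
    (γ : ℝ) (hγ : 0 < γ)
    (hgap : ∀ x : V → ℝ, ∑ v, x v = 0 → x ⬝ᵥ M *ᵥ x ≤ (1 - γ) * (x ⬝ᵥ x))
    (S : Finset V) (hS : 0 < S.card) (J : ℕ) (θ τ κ : ℝ) (hθ : 0 < θ) (hθ1 : θ < 1)
    (hb : ∀ j ≤ J, bseq M S j ⬝ᵥ bseq M S j ≤ (θ ^ j) ^ 2 * S.card)
    (hτ0 : 0 ≤ τ) (hτ1 : τ ≤ 1) (hτ : 2 * (θ ^ J) ^ 2 ≤ γ * τ ^ 2)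
    (hκ0 : 0 ≤ κ) (hκ : κ ≤ γ / 2) (hκN : κ * Fintype.card V ≤ S.card)
    (hmain : κ * (Fintype.card V + 2 * S.card / γ) ≤ S.card * (1 - τ) ^ 2 * (1 - θ))
    (f : V → ℝ) (hf : ∀ v ∈ S, f v = 0) :
    f ⬝ᵥ M *ᵥ f ≤ (1 - κ) * (f ⬝ᵥ f) := by
  by_contra hcon
  push Not at hcon
  have hNpos : 0 < (Fintype.card V : ℝ) := by
    have : S.card ≤ Fintype.card V := Finset.card_le_univ S
    exact_mod_cast lt_of_lt_of_le hS this
  set N : ℝ := (Fintype.card V : ℝ) with hN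
  set s : ℝ := (S.card : ℝ) with hs
  have hspos : 0 < s := by rw [hs]; exact_mod_cast hS
  set a := (∑ v, f v) / N with ha
  have haN : ∑ v, f v = N * a := by rw [ha]; field_simp
  set h : V → ℝ := f - fun _ => a with hh
  have hsum : ∑ v, h v = 0 := by simp [hh, haN, ← hN]
  set H := h ⬝ᵥ h with hH
  have hH0 : 0 ≤ H := dot_self_nonneg h
  have hE1 : γ * H ≤ DE M f f := psd_of_gap M hM h1 γ hgap f a haN
  have hpsd : ∀ x, 0 ≤ DE M x x := fun x => by
    have := psd_of_gap M hM h1 γ hgap x ((∑ v, x v) / N) (by rw [← hN]; field_simp)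
    exact le_trans (mul_nonneg hγ.le (dot_self_nonneg _)) this
  have hQ : f ⬝ᵥ f = N * a ^ 2 + H := by
    have e1 : f = h + fun _ => a := by simp [hh]
    have e2 : h ⬝ᵥ (fun _ => a) = 0 := by
      simp only [dotProduct]; rw [← Finset.sum_mul, hsum, zero_mul]
    have e3 : (fun _ : V => a) ⬝ᵥ (fun _ => a) = N * a ^ 2 := by
      simp only [dotProduct, Finset.sum_const, Finset.card_univ, nsmul_eq_mul, ← hN]; ring
    conv_lhs => rw [e1]
    rw [add_dotProduct, dotProduct_add, dotProduct_add, dotProduct_comm (fun _ => a) h, e2, e3]; ring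
  have hE2 : DE M f f < κ * (N * a ^ 2 + H) := by
    rw [← hQ]; unfold DE; linarith
  -- psi
  set ψ : V → ℝ := ∑ j ∈ Finset.range J, bseq M S j with hψ
  have hMψ : ψ - M *ᵥ ψ = bseq M S 0 - bseq M S J := by
    have : M *ᵥ ψ = ∑ j ∈ Finset.range J, bseq M S (j+1) := by
      rw [hψ, mulVec_sum]; rfl
    rw [this, hψ, ← Finset.sum_sub_distrib]
    exact Finset.sum_range_sub' (fun j => bseq M S j) J
  have hDE : ∀ x, DE M x ψ = x ⬝ᵥ bseq M S 0 - x ⬝ᵥ bseq M S J := fun x => by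
    unfold DE; rw [← dotProduct_sub, hMψ, dotProduct_sub]
  have hψψ : DE M ψ ψ ≤ s / (1 - θ) := by
    rw [hDE]
    have e1 : 0 ≤ ψ ⬝ᵥ bseq M S J := by
      refine Finset.sum_nonneg fun v _ => mul_nonneg ?_ (bseq_nonneg M h0 S J v)
      rw [hψ, Finset.sum_apply]
      exact Finset.sum_nonneg fun j _ => bseq_nonneg M h0 S j v
    have e2 : ψ ⬝ᵥ bseq M S 0 ≤ ∑ j ∈ Finset.range J, θ ^ j * s := by
      rw [hψ, sum_dotProduct]
      refine Finset.sum_le_sum fun j hj => ?_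
      exact bseq_dot_zero M S θ hθ j (hb j (Finset.mem_range.1 hj).le)
    have e3 : ∑ j ∈ Finset.range J, θ ^ j * s ≤ s / (1 - θ) := by
      rw [← Finset.sum_mul, div_eq_inv_mul]
      refine mul_le_mul_of_nonneg_right ?_ hspos.le
      clear hψ hDE hMψ e1 e2
      have := geom_sum_eq hθ1.ne J
      rw [this, ← neg_div_neg_eq, inv_eq_one_div]
      have : 0 < 1 - θ := by linarith
      rw [neg_sub, neg_sub]
      refine div_le_div_of_nonneg_right ?_ this.le
      have : 0 < θ ^ J := pow_pos hθ J
      linarith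
    linarith
  have hθ' : 0 < 1 - θ := by linarith
  have hF := DE_cs M hM hpsd f ψ (s / (1 - θ)) (div_pos hspos hθ') hψψ
  set z := h ⬝ᵥ bseq M S J with hz
  have hFz : DE M f ψ = -(a * s + z) := by
    rw [hDE]
    have e1 : f ⬝ᵥ bseq M S 0 = 0 := by
      refine Finset.sum_eq_zero fun v _ => ?_
      by_cases hv : v ∈ S
      · rw [hf v hv, zero_mul]
      · simp [bseq, hv]
    have e2 : f ⬝ᵥ bseq M S J = a * s + z := by
      have e1 : f = h + fun _ => a := by simp [hh]
      conv_lhs => rw [e1]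
      rw [add_dotProduct]
      have : (fun _ : V => a) ⬝ᵥ bseq M S J = a * s := by
        simp only [dotProduct]; rw [← Finset.mul_sum, bseq_sum M hM h1]
      rw [this]; ring
    rw [e1, e2]; ring
  have hz2 : z ^ 2 ≤ H * ((θ ^ J) ^ 2 * s) := by
    calc z ^ 2 ≤ _ := cs h (bseq M S J)
      _ ≤ _ := mul_le_mul_of_nonneg_left (hb J le_rfl) hH0
  rw [hFz, neg_sq] at hF
  exact numeric_core N s a H (DE M f f) z γ κ θ τ ((θ ^ J) ^ 2) hspos hγ hH0 (hpsd f) hθ' hτ0 hτ1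
    hτ hκ0 hκ hκN hmain hE1 hE2 hz2 hF

end VS


/-! ### Walk probabilities -/
namespace VS
open Matrix

/-- probability of avoiding `S` for the first `t` steps, by recursion. -/
def aseq (M : Matrix V V ℝ) (S : Finset V) : ℕ → V → ℝ
  | 0 => fun v => if v ∈ S then 0 else 1
  | (t + 1) => fun v => if v ∈ S then 0 else (M *ᵥ aseq M S t) v

lemma walkProb_avoid (M : Matrix V V ℝ) (S : Finset V) (t : ℕ) (u : V) :
    walkProb M u t (fun p => ∀ s, p s ∉ S) = aseq M S t u := by
  induction t generalizing u with
  | zero =>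
    unfold walkProb
    rw [← (Equiv.funUnique (Fin 1) V).symm.sum_comp]
    rw [Finset.sum_eq_single u]
    · by_cases hu : u ∈ S <;> simp [aseq, hu]
    · intro b _ hb; simp [hb]
    · simp
  | succ t ih =>
    unfold walkProb
    rw [← (Fin.consEquiv (fun _ : Fin (t+2) => V)).sum_comp, Fintype.sum_prod_type]
    rw [Finset.sum_eq_single u]
    · by_cases hu : u ∈ S
      · simp only [aseq, hu, if_true]
        refine Finset.sum_eq_zero fun q _ => ?_
        rw [if_neg]
        rintro ⟨_, h⟩
        exact h 0 (by simpa [Fin.consEquiv] using hu)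
      · simp only [aseq, hu, if_false, mulVec, dotProduct]
        simp_rw [← ih, walkProb, Finset.mul_sum]
        rw [Finset.sum_comm]
        refine Finset.sum_congr rfl fun q _ => ?_
        rw [Finset.sum_eq_single (q 0)]
        · by_cases hq : ∀ s, q s ∉ S
          · have : ∀ s : Fin (t + 2), Fin.cons (α := fun _ => V) u q s ∉ S := by
              intro s; refine Fin.cases ?_ ?_ s
              · simpa using hu
              · intro i; simpa using hq i
            rw [if_pos, if_pos, Fin.prod_univ_succ]
            · simp [Fin.consEquiv]
            · exact ⟨rfl, hq⟩
            · exact ⟨by simp [Fin.consEquiv], this⟩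
          · rw [if_neg, if_neg]
            · simp
            · tauto
            · rintro ⟨_, h⟩
              exact hq fun s => by simpa [Fin.consEquiv] using h s.succ
        · intro b _ hb
          rw [if_neg]; · simp
          rintro ⟨h, _⟩; exact hb h.symm
        · simp
    · intro b _ hb
      refine Finset.sum_eq_zero fun q _ => ?_
      rw [if_neg]
      rintro ⟨h, _⟩
      exact hb (by simpa [Fin.consEquiv] using h)
    · simp

lemma aseq_bound (M : Matrix V V ℝ) (hM : ∀ u v, M u v = M v u) (h0 : ∀ u v, 0 ≤ M u v)
    (S : Finset V) (lam : ℝ) (hl : 0 < lam)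
    (hQ : ∀ x : V → ℝ, (∀ v ∈ S, x v = 0) → x ⬝ᵥ M *ᵥ x ≤ lam * (x ⬝ᵥ x)) (t : ℕ) :
    aseq M S t ⬝ᵥ aseq M S t ≤ (lam ^ t) ^ 2 * Fintype.card V := by
  have hz : ∀ t, ∀ v, v ∉ Sᶜ → aseq M S t v = 0 := by
    intro t v hv
    have : v ∈ S := by simpa using hv
    cases t <;> simp [aseq, this]
  induction t with
  | zero =>
    simp only [pow_zero, one_pow, one_mul, dotProduct]
    calc _ ≤ ∑ v : V, (1 : ℝ) := by
          refine Finset.sum_le_sum fun v _ => ?_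
          simp only [aseq]; split_ifs <;> norm_num
      _ = _ := by simp
  | succ t ih =>
    have h1 := step_bound M hM h0 Sᶜ lam hl (fun x hx => hQ x fun v hv => hx v (by simpa using hv))
      (aseq M S (t+1)) (aseq M S t) (hz _) (hz _) (fun v hv => by
        have : v ∉ S := by simpa using hv
        simp [aseq, this])
    calc _ ≤ _ := h1
      _ ≤ lam ^ 2 * ((lam ^ t) ^ 2 * Fintype.card V) := by gcongr
      _ = _ := by ring

lemma aseq_le (M : Matrix V V ℝ) (hM : ∀ u v, M u v = M v u) (h0 : ∀ u v, 0 ≤ M u v)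
    (S : Finset V) (lam : ℝ) (hl : 0 < lam)
    (hQ : ∀ x : V → ℝ, (∀ v ∈ S, x v = 0) → x ⬝ᵥ M *ᵥ x ≤ lam * (x ⬝ᵥ x)) (t : ℕ) (u : V) :
    aseq M S t u ≤ lam ^ t * √(Fintype.card V) := by
  have h := aseq_bound M hM h0 S lam hl hQ t
  have h2 : aseq M S t u ^ 2 ≤ aseq M S t ⬝ᵥ aseq M S t := by
    rw [sq]
    exact Finset.single_le_sum (f := fun v => aseq M S t v * aseq M S t v)
      (fun v _ => mul_self_nonneg _) (Finset.mem_univ u)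
  refine le_of_sq_le_sq ?_ (by positivity)
  rw [mul_pow, Real.sq_sqrt (by positivity)]
  exact h2.trans h

lemma walkProb_nonneg (M : Matrix V V ℝ) (h0 : ∀ u v, 0 ≤ M u v) (u : V) (t : ℕ)
    (E : (Fin (t + 1) → V) → Prop) : 0 ≤ walkProb M u t E := by
  unfold walkProb
  refine Finset.sum_nonneg fun p _ => ?_
  split_ifs
  · exact Finset.prod_nonneg fun i _ => h0 _ _
  · exact le_rfl

lemma walkProb_union (M : Matrix V V ℝ) (h0 : ∀ u v, 0 ≤ M u v) (u : V) (t : ℕ)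
    (E : (Fin (t + 1) → V) → Prop) (C : Finset (Finset V))
    (Ev : Finset V → (Fin (t + 1) → V) → Prop)
    (hE : ∀ p, E p → ∃ S ∈ C, Ev S p) :
    walkProb M u t E ≤ ∑ S ∈ C, walkProb M u t (Ev S) := by
  unfold walkProb
  rw [Finset.sum_comm]
  refine Finset.sum_le_sum fun p _ => ?_
  have hp : 0 ≤ ∏ i : Fin t, M (p i.castSucc) (p i.succ) := Finset.prod_nonneg fun i _ => h0 _ _
  have hnn : ∀ S ∈ C, 0 ≤ (if p 0 = u ∧ Ev S p then
      ∏ i : Fin t, M (p i.castSucc) (p i.succ) else 0) := by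
    intro S _; split_ifs
    · exact hp
    · exact le_rfl
  by_cases h : p 0 = u ∧ E p
  · obtain ⟨S, hS, hav⟩ := hE p h.2
    rw [if_pos h]
    refine le_trans ?_ (Finset.single_le_sum hnn hS)
    rw [if_pos ⟨h.1, hav⟩]
  · rw [if_neg h]
    exact Finset.sum_nonneg hnn

end VS


/-! ### Graph structure -/
namespace VS
open Matrix

lemma layer_growth (G : SimpleGraph V) (d : ℕ) (hconn : G.Connected) (ε ρ D : ℝ)
    (hP3 : PropP3 G d ε ρ) (T : Finset V)
    (hdeg : ∀ v ∈ T, D ≤ ((T.filter fun w => G.Adj v w).card : ℝ)) (u : V) (i : ℕ)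
    (hi : ((i + 1 : ℕ) : ℝ) ≤ (d : ℝ) ^ ε) :
    ((T.filter fun v => G.dist u v = i).card : ℝ) * (D - ρ * i) ≤
      ((T.filter fun v => G.dist u v = i + 1).card : ℝ) * (ρ * (i + 1 : ℕ)) := by
  set L : ℕ → Finset V := fun i => T.filter fun v => G.dist u v = i with hL
  have hi' : (i : ℝ) ≤ (d : ℝ) ^ ε := by push_cast at hi; linarith
  have hdc := Finset.sum_card_bipartiteAbove_eq_sum_card_bipartiteBelow (s := L i) (t := L (i+1))
    (fun v w => G.Adj v w)
  have h1 : ((L i).card : ℝ) * (D - ρ * i) ≤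
      ∑ v ∈ L i, (((L (i+1)).bipartiteAbove (fun v w => G.Adj v w) v).card : ℝ) := by
    rw [← nsmul_eq_mul]
    refine Finset.card_nsmul_le_sum _ _ _ fun v hv => ?_
    have hv' := Finset.mem_filter.1 hv
    have a1 := hdeg v hv'.1
    have a2 := hP3 u v (by rw [hv'.2]; exact hi')
    rw [hv'.2] at a2
    have a3 : (T.filter fun w => G.Adj v w) ⊆
        ((L (i+1)).bipartiteAbove (fun v w => G.Adj v w) v) ∪
        ((univ : Finset V).filter fun w => G.Adj v w ∧ G.dist w u ≤ i) := by
      intro w hw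
      have hw' := Finset.mem_filter.1 hw
      by_cases hd : G.dist w u ≤ i
      · exact Finset.mem_union_right _ (Finset.mem_filter.2 ⟨Finset.mem_univ _, hw'.2, hd⟩)
      · refine Finset.mem_union_left _ ?_
        rw [Finset.mem_bipartiteAbove]
        refine ⟨Finset.mem_filter.2 ⟨hw'.1, ?_⟩, hw'.2⟩
        have tri := hconn.dist_triangle (u := u) (v := v) (w := w)
        have e1 : G.dist v w = 1 := SimpleGraph.dist_eq_one_iff_adj.2 hw'.2
        rw [SimpleGraph.dist_comm] at hd
        have := hv'.2
        omega
    have a4 := (Finset.card_le_card a3).trans (Finset.card_union_le _ _)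
    have a5 : ((T.filter fun w => G.Adj v w).card : ℝ) ≤
      (((L (i+1)).bipartiteAbove (fun v w => G.Adj v w) v).card : ℝ) +
        (((univ : Finset V).filter fun w => G.Adj v w ∧ G.dist w u ≤ i).card : ℝ) := by
      exact_mod_cast a4
    linarith
  have h2 : ∑ w ∈ L (i+1), (((L i).bipartiteBelow (fun v w => G.Adj v w) w).card : ℝ) ≤
      ((L (i+1)).card : ℝ) * (ρ * (i + 1 : ℕ)) := by
    rw [← nsmul_eq_mul]
    refine Finset.sum_le_card_nsmul _ _ _ fun w hw => ?_
    have hw' := Finset.mem_filter.1 hw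
    have a2 := hP3 u w (by rw [hw'.2]; exact hi)
    rw [hw'.2] at a2
    refine le_trans ?_ a2
    have : ((L i).bipartiteBelow (fun v w => G.Adj v w) w) ⊆
        ((univ : Finset V).filter fun v => G.Adj w v ∧ G.dist v u ≤ i + 1) := by
      intro v hv
      rw [Finset.mem_bipartiteBelow] at hv
      have := (Finset.mem_filter.1 hv.1).2
      refine Finset.mem_filter.2 ⟨Finset.mem_univ _, hv.2.symm, ?_⟩
      rw [SimpleGraph.dist_comm]; omega
    exact_mod_cast Finset.card_le_card this
  have h3 : ∑ v ∈ L i, (((L (i+1)).bipartiteAbove (fun v w => G.Adj v w) v).card : ℝ) =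
      ∑ w ∈ L (i+1), (((L i).bipartiteBelow (fun v w => G.Adj v w) w).card : ℝ) := by
    exact_mod_cast hdc
  exact h1.trans (h3.le.trans h2)

lemma degenerate (G : SimpleGraph V) (d : ℕ) (hconn : G.Connected) (ε ρ D B : ℝ) (hρ : 0 < ρ)
    (hP3 : PropP3 G d ε ρ) (r : ℕ) (hr : (r : ℝ) ≤ (d : ℝ) ^ ε) (hB : 0 ≤ B)
    (hgrow : (B + 1) * (ρ * r) ≤ D) (T : Finset V) (hT : T.Nonempty)
    (hcard : (T.card : ℝ) < B ^ r) :
    ∃ v ∈ T, ((T.filter fun w => G.Adj v w).card : ℝ) ≤ D := by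
  by_contra hcon
  push Not at hcon
  obtain ⟨u, hu⟩ := hT
  have key : ∀ i ≤ r, B ^ i ≤ ((T.filter fun v => G.dist u v = i).card : ℝ) := by
    intro i
    induction i with
    | zero =>
      intro _
      have : 0 < (T.filter fun v => G.dist u v = 0).card :=
        Finset.card_pos.2 ⟨u, Finset.mem_filter.2 ⟨hu, by simp⟩⟩
      simp only [pow_zero]
      exact_mod_cast this
    | succ i ih =>
      intro hi
      have hir : ((i + 1 : ℕ) : ℝ) ≤ r := by exact_mod_cast hi
      have h1 := layer_growth G d hconn ε ρ D hP3 T (fun v hv => (hcon v hv).le) u i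
        (hir.trans hr)
      have h2 := ih (by omega)
      have hpos : 0 < ρ * ((i + 1 : ℕ) : ℝ) := by positivity
      have h3 : B * (ρ * ((i + 1 : ℕ) : ℝ)) ≤ D - ρ * i := by
        have e1 : B * (ρ * ((i + 1 : ℕ) : ℝ)) ≤ B * (ρ * r) := by gcongr
        have e2 : ρ * (i : ℝ) ≤ ρ * r := by
          push_cast at hir
          gcongr; linarith
        linarith
      refine le_of_mul_le_mul_right ?_ hpos
      calc B ^ (i + 1) * (ρ * ((i + 1 : ℕ) : ℝ)) = B ^ i * (B * (ρ * ((i + 1 : ℕ) : ℝ))) := by ring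
        _ ≤ B ^ i * (D - ρ * i) := by gcongr
        _ ≤ ((T.filter fun v => G.dist u v = i).card : ℝ) * (D - ρ * i) := by
            have : 0 ≤ D - ρ * i := le_trans (by positivity) h3
            gcongr
        _ ≤ _ := h1
  have h1 := key r le_rfl
  have h2 : ((T.filter fun v => G.dist u v = r).card : ℝ) ≤ T.card := by
    exact_mod_cast Finset.card_filter_le _ _
  linarith

/-- real adjacency indicator -/
def adjR (G : SimpleGraph V) (u v : V) : ℝ := if G.Adj u v then 1 else 0

lemma adjR_comm (G : SimpleGraph V) (u v : V) : adjR G u v = adjR G v u := by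
  simp [adjR, G.adj_comm]

lemma adjR_nonneg (G : SimpleGraph V) (u v : V) : 0 ≤ adjR G u v := by
  unfold adjR; split_ifs <;> norm_num

lemma sum_adjR (G : SimpleGraph V) (T : Finset V) (v : V) :
    ∑ w ∈ T, adjR G v w = ((T.filter fun w => G.Adj v w).card : ℝ) := by
  simp [adjR]

lemma quad_degenerate (G : SimpleGraph V) (D α : ℝ) (hα : 0 < α) (x : V → ℝ) (T : Finset V)
    (hdeg : ∀ T' ⊆ T, T'.Nonempty → ∃ v ∈ T', ((T'.filter fun w => G.Adj v w).card : ℝ) ≤ D) :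
    ∑ u ∈ T, ∑ v ∈ T, x u * adjR G u v * x v ≤
      α * D * ∑ v ∈ T, x v ^ 2 + α⁻¹ * ∑ w ∈ T, (∑ v ∈ T, adjR G w v) * x w ^ 2 := by
  induction T using Finset.strongInduction with
  | H T ih =>
    rcases T.eq_empty_or_nonempty with rfl | hne
    · simp
    obtain ⟨v, hv, hvD⟩ := hdeg T subset_rfl hne
    have ih' := ih (T.erase v) (Finset.erase_ssubset hv)
      (fun T' hT' h => hdeg T' (hT'.trans (Finset.erase_subset _ _)) h)
    set R := T.erase v with hR
    have hTR : T = insert v R := (Finset.insert_erase hv).symm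
    have hvR : v ∉ R := Finset.notMem_erase v T
    have hvv : adjR G v v = 0 := by simp [adjR]
    rw [← sum_adjR] at hvD
    rw [hTR] at hvD ⊢
    rw [Finset.sum_insert hvR, hvv, zero_add] at hvD
    simp only [Finset.sum_insert hvR, hvv, mul_zero, zero_mul, zero_add, Finset.sum_add_distrib,
      add_mul]
    have e1 : ∑ w ∈ R, x w * adjR G w v * x v = ∑ w ∈ R, x v * adjR G v w * x w :=
      Finset.sum_congr rfl fun w _ => by rw [adjR_comm G w v]; ring
    have e2 : ∑ w ∈ R, adjR G w v * x w ^ 2 = ∑ w ∈ R, adjR G v w * x w ^ 2 :=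
      Finset.sum_congr rfl fun w _ => by rw [adjR_comm G w v]
    rw [e1, e2]
    have e3 : 2 * ∑ w ∈ R, x v * adjR G v w * x w ≤
        α * (∑ w ∈ R, adjR G v w) * x v ^ 2 + α⁻¹ * ∑ w ∈ R, adjR G v w * x w ^ 2 := by
      rw [Finset.mul_sum, Finset.mul_sum, Finset.mul_sum, Finset.sum_mul, ← Finset.sum_add_distrib]
      refine Finset.sum_le_sum fun w _ => ?_
      have h0 := adjR_nonneg G v w
      have h1 : 2 * (x v * x w) ≤ α * x v ^ 2 + α⁻¹ * x w ^ 2 := by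
        have : 0 ≤ α⁻¹ * (α * x v - x w) ^ 2 := by positivity
        have e : α⁻¹ * (α * x v - x w) ^ 2 = α * x v ^ 2 - 2 * (x v * x w) + α⁻¹ * x w ^ 2 := by
          field_simp; ring
        linarith
      nlinarith
    have e4 : α * (∑ w ∈ R, adjR G v w) * x v ^ 2 ≤ α * D * x v ^ 2 := by gcongr
    have e5 : 0 ≤ α⁻¹ * ((∑ w ∈ R, adjR G v w) * x v ^ 2) := by
      have : 0 ≤ ∑ w ∈ R, adjR G v w := Finset.sum_nonneg fun w _ => adjR_nonneg G v w
      positivity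
    simp only [mul_add]
    linarith

lemma simpleStep_eq (G : SimpleGraph V) (d : ℕ) (u v : V) :
    simpleStep G d u v = (d : ℝ)⁻¹ * adjR G u v := by
  simp [simpleStep, adjR]

lemma simpleStep_symm (G : SimpleGraph V) (d : ℕ) (u v : V) :
    simpleStep G d u v = simpleStep G d v u := by
  rw [simpleStep_eq, simpleStep_eq, adjR_comm]

lemma simpleStep_nonneg (G : SimpleGraph V) (d : ℕ) (u v : V) : 0 ≤ simpleStep G d u v := by
  rw [simpleStep_eq]; exact mul_nonneg (by positivity) (adjR_nonneg _ _ _)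

lemma simpleStep_sum (G : SimpleGraph V) (d : ℕ) (hd : 0 < d)
    (hreg : ∀ v, ((univ : Finset V).filter fun w => G.Adj v w).card = d) (u : V) :
    ∑ v, simpleStep G d u v = 1 := by
  simp_rw [simpleStep_eq]
  rw [← Finset.mul_sum, sum_adjR, hreg]
  have : (d : ℝ) ≠ 0 := by positivity
  field_simp

lemma step_norm (G : SimpleGraph V) (d : ℕ) (hd : 0 < d)
    (hreg : ∀ v, ((univ : Finset V).filter fun w => G.Adj v w).card = d)
    (D α : ℝ) (hα : 0 < α) (X : Finset V)
    (hdeg : ∀ T' ⊆ X, T'.Nonempty → ∃ v ∈ T', ((T'.filter fun w => G.Adj v w).card : ℝ) ≤ D)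
    (x : V → ℝ) (hx : ∀ v, v ∉ X → x v = 0) :
    x ⬝ᵥ simpleStep G d *ᵥ x ≤ (α * D / d + α⁻¹) * (x ⬝ᵥ x) := by
  have h := quad_degenerate G D α hα x X hdeg
  have hd' : (0 : ℝ) < d := by positivity
  have e1 : x ⬝ᵥ simpleStep G d *ᵥ x = (d : ℝ)⁻¹ * ∑ u ∈ X, ∑ v ∈ X, x u * adjR G u v * x v := by
    rw [quad_expand, Finset.mul_sum]
    rw [← Finset.sum_subset (Finset.subset_univ X)
      (fun u _ hu => by simp [hx u hu])]
    refine Finset.sum_congr rfl fun u _ => ?_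
    rw [← Finset.sum_subset (Finset.subset_univ X)
      (fun v _ hv => by simp [hx v hv]), Finset.mul_sum]
    refine Finset.sum_congr rfl fun v _ => ?_
    rw [simpleStep_eq]; ring
  have e2 : x ⬝ᵥ x = ∑ v ∈ X, x v ^ 2 := by
    simp only [dotProduct, ← sq]
    exact (Finset.sum_subset (Finset.subset_univ X) (fun v _ hv => by simp [hx v hv])).symm
  have e3 : ∑ w ∈ X, (∑ v ∈ X, adjR G w v) * x w ^ 2 ≤ d * ∑ w ∈ X, x w ^ 2 := by
    rw [Finset.mul_sum]
    refine Finset.sum_le_sum fun w _ => ?_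
    gcongr
    rw [sum_adjR, ← hreg w]
    exact_mod_cast Finset.card_le_card (Finset.filter_subset_filter _ (Finset.subset_univ _))
  rw [e1, e2]
  calc _ ≤ (d : ℝ)⁻¹ * (α * D * ∑ v ∈ X, x v ^ 2 + α⁻¹ * (d * ∑ w ∈ X, x w ^ 2)) := by
        gcongr
        refine h.trans ?_
        gcongr
    _ = _ := by field_simp

/-- closed neighbourhood iterates -/
def nbh (G : SimpleGraph V) (S : Finset V) : ℕ → Finset V
  | 0 => S
  | (j + 1) => nbh G S j ∪ (nbh G S j).biUnion fun v => univ.filter fun w => G.Adj v w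

lemma nbh_mono (G : SimpleGraph V) (S : Finset V) : Monotone (nbh G S) :=
  monotone_nat_of_le_succ fun _ => Finset.subset_union_left

lemma nbh_card (G : SimpleGraph V) (d : ℕ)
    (hreg : ∀ v, ((univ : Finset V).filter fun w => G.Adj v w).card = d) (S : Finset V) (j : ℕ) :
    (nbh G S j).card ≤ (d + 1) ^ j * S.card := by
  induction j with
  | zero => simp [nbh]
  | succ j ih =>
    calc (nbh G S (j+1)).card ≤ (nbh G S j).card + (nbh G S j).card * d := by
          refine (Finset.card_union_le _ _).trans ?_
          gcongr
          exact Finset.card_biUnion_le_card_mul _ _ _ fun v _ => (hreg v).le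
      _ = (d + 1) * (nbh G S j).card := by ring
      _ ≤ (d + 1) * ((d + 1) ^ j * S.card) := by gcongr
      _ = _ := by ring

lemma bseq_supp (G : SimpleGraph V) (d : ℕ) (S : Finset V) (j : ℕ) (v : V)
    (hv : v ∉ nbh G S j) : bseq (simpleStep G d) S j v = 0 := by
  induction j generalizing v with
  | zero =>
    have : v ∉ S := hv
    simp [bseq, this]
  | succ j ih =>
    simp only [bseq, mulVec, dotProduct]
    refine Finset.sum_eq_zero fun w _ => ?_
    by_cases hw : w ∈ nbh G S j
    · have : ¬ G.Adj v w := by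
        intro h
        refine hv (Finset.mem_union_right _ (Finset.mem_biUnion.2 ⟨w, hw, ?_⟩))
        exact Finset.mem_filter.2 ⟨Finset.mem_univ _, h.symm⟩
      simp [simpleStep, this]
    · rw [ih w hw, mul_zero]

lemma gap_simple (G : SimpleGraph V) (d : ℕ) (g : ℝ) (h : SpectralGapLB G d g) (x : V → ℝ)
    (hx : ∑ v, x v = 0) : x ⬝ᵥ simpleStep G d *ᵥ x ≤ (1 - 2 * g) * (x ⬝ᵥ x) := by
  have h1 := h x hx
  have e2 : x ⬝ᵥ x = ∑ v, x v ^ 2 := by simp only [dotProduct, ← sq]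
  have e1 : (∑ u : V, ∑ v : V, x u * lazyStep G d u v * x v) =
      2⁻¹ * (x ⬝ᵥ x) + 2⁻¹ * (x ⬝ᵥ simpleStep G d *ᵥ x) := by
    rw [quad_expand]
    simp only [dotProduct, Finset.mul_sum]
    rw [← Finset.sum_add_distrib]
    refine Finset.sum_congr rfl fun u _ => ?_
    have : 2⁻¹ * (x u * x u) = ∑ v, (if u = v then 2⁻¹ * (x u * x v) else 0) := by simp
    rw [this, ← Finset.sum_add_distrib]
    refine Finset.sum_congr rfl fun v _ => ?_
    simp only [lazyStep, simpleStep, Matrix.of_apply]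
    split_ifs <;> ring
  rw [e1, ← e2] at h1
  linarith

end VS


/-! ### Counting connected sets -/
namespace VS

lemma crossing (G : SimpleGraph V) (S T : Finset V) (hS : (G.induce (S : Set V)).Connected)
    (v w : V) (hv : v ∈ S) (hw : w ∈ S) (hvT : v ∈ T) (hwT : w ∉ T) :
    ∃ x ∈ S, ∃ y ∈ S, x ∈ T ∧ y ∉ T ∧ G.Adj x y := by
  obtain ⟨p⟩ := hS.preconnected ⟨v, hv⟩ ⟨w, hw⟩
  obtain ⟨e, _, h1, h2⟩ := p.exists_boundary_dart {z | (z : V) ∈ T} hvT hwT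
  exact ⟨e.fst, e.fst.2, e.snd, e.snd.2, h1, h2, e.adj⟩

lemma exists_conn_subset (G : SimpleGraph V) (S : Finset V)
    (hS : (G.induce (S : Set V)).Connected) (k : ℕ) (hk : k + 1 ≤ S.card) :
    ∃ T ⊆ S, (G.induce (T : Set V)).Connected ∧ T.card = k + 1 := by
  induction k with
  | zero =>
    obtain ⟨v, hv⟩ : S.Nonempty := Finset.card_pos.1 (by omega)
    refine ⟨{v}, by simpa using hv, ?_, by simp⟩
    rw [Finset.coe_singleton]
    have : Nonempty (({v} : Set V) : Type _) := ⟨⟨v, rfl⟩⟩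
    exact ⟨SimpleGraph.Preconnected.of_subsingleton⟩
  | succ k ih =>
    obtain ⟨T, hTS, hT, hc⟩ := ih (by omega)
    obtain ⟨v, hv⟩ : T.Nonempty := Finset.card_pos.1 (by omega)
    obtain ⟨w, hw, hwT⟩ : ∃ w ∈ S, w ∉ T := by
      by_contra h
      push Not at h
      have := Finset.card_le_card (show S ⊆ T from h)
      omega
    obtain ⟨x, hx, y, hy, hxT, hyT, hadj⟩ := crossing G S T hS v w (hTS hv) hw hv hwT
    refine ⟨insert y T, Finset.insert_subset hy hTS, ?_, by rw [Finset.card_insert_of_notMem hyT, hc]⟩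
    have : ((insert y T : Finset V) : Set V) = (T : Set V) ∪ {y} := by
      rw [Finset.coe_insert, Set.insert_eq, Set.union_comm]
    rw [this]
    exact SimpleGraph.connected_induce_union (v := x) (w := y) hT.preconnected
      SimpleGraph.Preconnected.of_subsingleton hxT rfl hadj

/-- outer vertex boundary -/
def bdry (G : SimpleGraph V) (S : Finset V) : Finset V :=
  univ.filter fun w => w ∉ S ∧ ∃ v ∈ S, G.Adj v w

lemma bdry_card (G : SimpleGraph V) (d : ℕ)
    (hreg : ∀ v, ((univ : Finset V).filter fun w => G.Adj v w).card = d) (S : Finset V) :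
    (bdry G S).card ≤ S.card * d := by
  have : bdry G S ⊆ S.biUnion fun v => univ.filter fun w => G.Adj v w := by
    intro w hw
    obtain ⟨_, _, v, hv, h⟩ := Finset.mem_filter.1 hw
    exact Finset.mem_biUnion.2 ⟨v, hv, Finset.mem_filter.2 ⟨Finset.mem_univ _, h⟩⟩
  exact (Finset.card_le_card this).trans
    (Finset.card_biUnion_le_card_mul _ _ _ fun v _ => (hreg v).le)

/-- configurations whose cluster is exactly `S` -/
def cfg (G : SimpleGraph V) (S : Finset V) : Finset (Finset V) :=
  univ.filter fun ω => S ⊆ ω ∧ Disjoint ω (bdry G S)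

lemma cfg_subset (G : SimpleGraph V) (S S' : Finset V) (v : V) (hv : v ∈ S) (hv' : v ∈ S')
    (hS' : (G.induce (S' : Set V)).Connected) (ω : Finset V) (h : ω ∈ cfg G S)
    (h' : ω ∈ cfg G S') : S' ⊆ S := by
  by_contra hcon
  obtain ⟨w, hw, hwS⟩ := Finset.not_subset.1 hcon
  obtain ⟨x, _, y, hy, hxS, hyS, hadj⟩ := crossing G S' S hS' v w hv' hw hv hwS
  have h1 := (Finset.mem_filter.1 h).2.2
  have h2 := (Finset.mem_filter.1 h').2.1
  exact Finset.disjoint_left.1 h1 (h2 hy)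
    (Finset.mem_filter.2 ⟨Finset.mem_univ _, hyS, x, hxS, hadj⟩)

lemma cfg_weight (G : SimpleGraph V) (S : Finset V) (p : ℝ) :
    ∑ ω ∈ cfg G S, p ^ ω.card * (1 - p) ^ (Fintype.card V - ω.card) =
      p ^ S.card * (1 - p) ^ (bdry G S).card := by
  set R : Finset V := (S ∪ bdry G S)ᶜ with hR
  have hSb : Disjoint S (bdry G S) := by
    rw [Finset.disjoint_left]
    intro v hv hb
    exact (Finset.mem_filter.1 hb).2.1 hv
  have hcfg : cfg G S = R.powerset.image fun ω => S ∪ ω := by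
    ext ω
    simp only [cfg, Finset.mem_filter, Finset.mem_univ, true_and, Finset.mem_image,
      Finset.mem_powerset]
    constructor
    · rintro ⟨h1, h2⟩
      refine ⟨ω \ S, ?_, Finset.union_sdiff_of_subset h1⟩
      intro w hw
      obtain ⟨hw1, hw2⟩ := Finset.mem_sdiff.1 hw
      rw [hR, Finset.mem_compl, Finset.mem_union]
      rintro (h | h)
      · exact hw2 h
      · exact Finset.disjoint_left.1 h2 hw1 h
    · rintro ⟨ω', h, rfl⟩
      refine ⟨Finset.subset_union_left, ?_⟩
      rw [Finset.disjoint_union_left]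
      refine ⟨hSb, ?_⟩
      rw [Finset.disjoint_left]
      intro w hw hb
      have := h hw
      rw [hR, Finset.mem_compl] at this
      exact this (Finset.mem_union_right _ hb)
  have hdisj : ∀ ω ∈ R.powerset, Disjoint S ω := by
    intro ω hω
    rw [Finset.disjoint_left]
    intro w hw hwω
    have := Finset.mem_powerset.1 hω hwω
    rw [hR, Finset.mem_compl] at this
    exact this (Finset.mem_union_left _ hw)
  rw [hcfg, Finset.sum_image]
  · have hcard : Fintype.card V = S.card + (bdry G S).card + R.card := by
      rw [← Finset.card_union_of_disjoint hSb, hR, Finset.card_add_card_compl]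
    calc _ = ∑ ω ∈ R.powerset, p ^ S.card * (1 - p) ^ (bdry G S).card *
            (p ^ ω.card * (1 - p) ^ (R.card - ω.card)) := by
          refine Finset.sum_congr rfl fun ω hω => ?_
          rw [Finset.card_union_of_disjoint (hdisj ω hω), hcard]
          have hle := Finset.card_le_card (Finset.mem_powerset.1 hω)
          have : S.card + (bdry G S).card + R.card - (S.card + ω.card) =
              (bdry G S).card + (R.card - ω.card) := by omega
          rw [this, pow_add, pow_add]; ring
      _ = _ := by
          rw [← Finset.mul_sum, Finset.sum_pow_mul_eq_add_pow]
          simp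
  · intro ω hω ω' hω' h
    have h1 := hdisj ω hω
    have h2 := hdisj ω' hω'
    have : (S ∪ ω) \ S = (S ∪ ω') \ S := by simp only at h; rw [h]
    rwa [Finset.union_sdiff_cancel_left h1, Finset.union_sdiff_cancel_left h2] at this

/-- connected sets of size `k` -/
def connSets (G : SimpleGraph V) (k : ℕ) : Finset (Finset V) :=
  univ.filter fun S => (G.induce (S : Set V)).Connected ∧ S.card = k

lemma count_rooted (G : SimpleGraph V) (d k : ℕ)
    (hreg : ∀ v, ((univ : Finset V).filter fun w => G.Adj v w).card = d)
    (p : ℝ) (hp0 : 0 ≤ p) (hp1 : p ≤ 1) (v : V) :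
    (((connSets G k).filter fun S => v ∈ S).card : ℝ) * (p ^ k * (1 - p) ^ (k * d)) ≤ 1 := by
  set C := (connSets G k).filter fun S => v ∈ S with hC
  have hmem : ∀ S ∈ C, (G.induce (S : Set V)).Connected ∧ S.card = k ∧ v ∈ S := by
    intro S hS
    obtain ⟨h1, h2⟩ := Finset.mem_filter.1 hS
    obtain ⟨_, h3, h4⟩ := Finset.mem_filter.1 h1
    exact ⟨h3, h4, h2⟩
  have hq0 : 0 ≤ 1 - p := by linarith
  have h1 : (C.card : ℝ) * (p ^ k * (1 - p) ^ (k * d)) ≤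
      ∑ S ∈ C, ∑ ω ∈ cfg G S, p ^ ω.card * (1 - p) ^ (Fintype.card V - ω.card) := by
    rw [← nsmul_eq_mul]
    refine Finset.card_nsmul_le_sum _ _ _ fun S hS => ?_
    obtain ⟨h3, h4, h2⟩ := hmem S hS
    rw [cfg_weight, h4]
    have := bdry_card G d hreg S
    rw [h4] at this
    exact mul_le_mul_of_nonneg_left (pow_le_pow_of_le_one hq0 (by linarith) this) (by positivity)
  rw [← Finset.sum_biUnion] at h1
  · refine h1.trans ?_
    calc _ ≤ ∑ ω : Finset V, p ^ ω.card * (1 - p) ^ (Fintype.card V - ω.card) :=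
          Finset.sum_le_sum_of_subset_of_nonneg (Finset.subset_univ _)
            fun ω _ _ => by positivity
      _ = 1 := by rw [Fintype.sum_pow_mul_eq_add_pow]; simp
  · intro S hS S' hS' hne
    rw [Function.onFun, Finset.disjoint_left]
    intro ω hω hω'
    obtain ⟨h3, h4, h2⟩ := hmem S hS
    obtain ⟨h3', h4', h2'⟩ := hmem S' hS'
    exact hne (Finset.Subset.antisymm (cfg_subset G S' S v h2' h2 h3 ω hω' hω)
      (cfg_subset G S S' v h2 h2' h3' ω hω hω'))

lemma count_conn (G : SimpleGraph V) (d k : ℕ) (hd : 2 ≤ d) (hk : 1 ≤ k)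
    (hreg : ∀ v, ((univ : Finset V).filter fun w => G.Adj v w).card = d) :
    ((connSets G k).card : ℝ) ≤ Fintype.card V * (Real.exp 2 * d) ^ k := by
  have hd' : (2 : ℝ) ≤ d := by exact_mod_cast hd
  have hd0 : (0 : ℝ) < d := by linarith
  have hroot : ∀ v : V, (((connSets G k).filter fun S => v ∈ S).card : ℝ) ≤
      (Real.exp 2 * d) ^ k := by
    intro v
    have hinv : (d : ℝ)⁻¹ ≤ 1 / 2 := by rw [inv_le_comm₀ hd0 (by norm_num)]; norm_num; exact hd
    have h := count_rooted G d k hreg (d : ℝ)⁻¹ (by positivity) (by linarith) v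
    have hlow : (Real.exp 2)⁻¹ ≤ (1 - (d : ℝ)⁻¹) ^ d := by
      have hq : 0 < 1 - (d : ℝ)⁻¹ := by linarith
      have h1 := Real.one_sub_inv_le_log_of_pos hq
      have h2 : -(2 * (d : ℝ)⁻¹) ≤ 1 - (1 - (d : ℝ)⁻¹)⁻¹ := by
        have : (1 - (d : ℝ)⁻¹)⁻¹ ≤ 1 + 2 * (d : ℝ)⁻¹ := by
          rw [inv_le_comm₀ hq (by positivity), inv_le_iff_one_le_mul₀ (by positivity)]
          have : 0 < (d : ℝ)⁻¹ := by positivity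
          nlinarith
        linarith
      have h3 : -2 ≤ d * Real.log (1 - (d : ℝ)⁻¹) := by
        calc (-2 : ℝ) = d * (-(2 * (d : ℝ)⁻¹)) := by field_simp
          _ ≤ _ := by gcongr; linarith
      rw [← Real.exp_neg, ← Real.exp_log hq, ← Real.exp_nat_mul]
      exact Real.exp_le_exp.2 h3
    have h4 : (Real.exp 2 * d)⁻¹ ^ k ≤ (d : ℝ)⁻¹ ^ k * (1 - (d : ℝ)⁻¹) ^ (k * d) := by
      rw [mul_inv, mul_pow, mul_comm k d, pow_mul, mul_comm]
      gcongr
    have h5 : (((connSets G k).filter fun S => v ∈ S).card : ℝ) * (Real.exp 2 * d)⁻¹ ^ k ≤ 1 :=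
      (mul_le_mul_of_nonneg_left h4 (by positivity)).trans h
    rw [inv_pow, ← div_eq_mul_inv, div_le_one (by positivity)] at h5
    exact h5
  have hsub : connSets G k ⊆ univ.biUnion fun v => (connSets G k).filter fun S => v ∈ S := by
    intro S hS
    obtain ⟨_, _, hc⟩ := Finset.mem_filter.1 hS
    obtain ⟨v, hv⟩ : S.Nonempty := Finset.card_pos.1 (by omega)
    exact Finset.mem_biUnion.2 ⟨v, Finset.mem_univ _, Finset.mem_filter.2 ⟨hS, hv⟩⟩
  calc ((connSets G k).card : ℝ) ≤ ∑ v : V, (((connSets G k).filter fun S => v ∈ S).card : ℝ) := by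
        exact_mod_cast (Finset.card_le_card hsub).trans Finset.card_biUnion_le
    _ ≤ ∑ v : V, (Real.exp 2 * d) ^ k := Finset.sum_le_sum fun v _ => hroot v
    _ = _ := by simp

end VS


/-! ### Assembly -/
namespace VS
open Matrix

lemma fixed_bound (G : SimpleGraph V) (d : ℕ) (hd : 2 ≤ d) (hconn : G.Connected)
    (hreg : ∀ v, ((univ : Finset V).filter fun w => G.Adj v w).card = d)
    (g : ℝ) (hg : 0 < g) (hgap : SpectralGapLB G d g)
    (ε ρ : ℝ) (hρ : 0 < ρ) (hP3 : PropP3 G d ε ρ)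
    (k : ℕ) (hk : 1 ≤ k) (K : ℝ) (hK : k = ⌈K⌉₊)
    (J r : ℕ) (D α B θ τ κ : ℝ) (hr : (r : ℝ) ≤ (d : ℝ) ^ ε) (hB : 0 ≤ B)
    (hgrow : (B + 1) * (ρ * r) ≤ D) (hcard : ((d : ℝ) + 1) ^ J * k < B ^ r)
    (hα : 0 < α) (hθ : α * D / d + α⁻¹ ≤ θ) (hθ0 : 0 < θ) (hθ1 : θ < 1)
    (hτ0 : 0 ≤ τ) (hτ1 : τ ≤ 1) (hτ : 2 * (θ ^ J) ^ 2 ≤ 2 * g * τ ^ 2)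
    (hκ0 : 0 ≤ κ) (hκ : κ ≤ g) (hκN : κ * Fintype.card V ≤ k)
    (hmain : κ * (Fintype.card V + k / g) ≤ k * (1 - τ) ^ 2 * (1 - θ))
    (u : V) (t : ℕ) :
    walkProb (simpleStep G d) u t (fun p => bigVacantComponent G p 0 K) ≤
      (Fintype.card V * (Real.exp 2 * d) ^ k) *
        (Real.exp (-κ) ^ t * √(Fintype.card V)) := by
  have hd0 : 0 < d := by omega
  have h0 := simpleStep_nonneg G d
  have hM := simpleStep_symm G d
  have h1 := simpleStep_sum G d hd0 hreg
  have hgap' := gap_simple G d g hgap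
  have hav : ∀ S ∈ connSets G k,
      walkProb (simpleStep G d) u t (fun p => ∀ s, p s ∉ S) ≤
        Real.exp (-κ) ^ t * √(Fintype.card V) := by
    intro S hS
    obtain ⟨_, _, hSk⟩ := Finset.mem_filter.1 hS
    have hQX : ∀ x : V → ℝ, (∀ v, v ∉ nbh G S J → x v = 0) →
        x ⬝ᵥ simpleStep G d *ᵥ x ≤ θ * (x ⬝ᵥ x) := by
      intro x hx
      refine (step_norm G d hd0 hreg D α hα (nbh G S J) ?_ x hx).trans
        (mul_le_mul_of_nonneg_right hθ (dot_self_nonneg x))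
      intro T hT hne
      refine degenerate G d hconn ε ρ D B hρ hP3 r hr hB hgrow T hne (lt_of_le_of_lt ?_ hcard)
      have := (Finset.card_le_card hT).trans (nbh_card G d hreg S J)
      rw [hSk] at this
      exact_mod_cast this
    have hb := bseq_bound (simpleStep G d) hM h0 S (nbh G S J) θ hθ0 J hQX
      (fun j hj v hv => bseq_supp G d S j v fun h => hv (nbh_mono G S hj h))
    have hsp := spectral_bound (simpleStep G d) hM h0 h1 (2 * g) (by positivity) hgap' S
      (by omega) J θ τ κ hθ0 hθ1 hb hτ0 hτ1 hτ hκ0 (by linarith) (by rw [hSk]; exact hκN)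
      (by
        rw [hSk]
        have : 2 * (k : ℝ) / (2 * g) = k / g := by field_simp
        rw [this]; exact hmain)
    rw [walkProb_avoid]
    refine aseq_le (simpleStep G d) hM h0 S _ (Real.exp_pos _) (fun x hx => ?_) t u
    refine (hsp x hx).trans (mul_le_mul_of_nonneg_right ?_ (dot_self_nonneg x))
    have := Real.add_one_le_exp (-κ)
    linarith
  have hun := walkProb_union (simpleStep G d) h0 u t (fun p => bigVacantComponent G p 0 K)
    (connSets G k) (fun S p => ∀ s, p s ∉ S) (by
      rintro p ⟨S, hS1, hS2, hS3⟩
      have hkS : (k - 1) + 1 ≤ S.card := by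
        have : k ≤ S.card := by rw [hK]; exact Nat.ceil_le.2 hS3
        omega
      obtain ⟨T, hTS, hT, hTc⟩ := exists_conn_subset G S hS2 (k - 1) hkS
      refine ⟨T, Finset.mem_filter.2 ⟨Finset.mem_univ _, hT, by omega⟩, fun s hs => ?_⟩
      exact hS1 (p s) (hTS hs) s (Nat.zero_le _) rfl)
  refine hun.trans ((Finset.sum_le_card_nsmul _ _ _ hav).trans ?_)
  rw [nsmul_eq_mul]
  exact mul_le_mul_of_nonneg_right (count_conn G d k hd hk hreg) (by positivity)

set_option maxHeartbeats 1000000 in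
lemma final_bound (G : SimpleGraph V) (d : ℕ) (hconn : G.Connected)
    (hreg : ∀ v, ((univ : Finset V).filter fun w => G.Adj v w).card = d)
    (N x y ε c₁ ρ₁ c₂ ρ δ : ℝ) (hN : N = Fintype.card V)
    (hx : (d : ℝ) = x ^ 10) (hx11 : 11 ≤ x) (hlogN : 1 ≤ Real.log N)
    (hc₁ : 0 < c₁) (hρ₁ : ρ₁ ≤ 3) (hgap : SpectralGapLB G d (c₁ / (d : ℝ) ^ ρ₁))
    (hρ : 0 < ρ) (hP3 : PropP3 G d ε ρ) (hδ : 0 < δ) (hc₂ : 0 < c₂)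
    (hε0 : 0 < ε) (hε1 : ε < 1) (hdN : (d : ℝ) ^ 5 * Real.log N ≤ c₂ ^ 5 * N)
    (hy : (d : ℝ) ^ ε = y ^ 2) (hy16 : 16 ≤ y) (hyx : y ≤ x ^ 5)
    (hLL : Real.log (Real.log N) ≤ y)
    (hx1 : 2 ^ 40 / c₁ ≤ x) (hx2 : (δ + 1) * c₂ ^ 5 / c₁ ≤ x) (hx3 : 2 ^ 20 * (δ + 1) < x)
    (hx4 : 408 * ρ ≤ x) (hx5 : 100 * Real.log x ≤ x)
    (hω : 3 + 2 / δ ≤ ε * Real.log d)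
    (u : V) (t : ℕ) (ht : (1 + ε) * (N * Real.log d) ≤ t) :
    walkProb (simpleStep G d) u t (fun p => bigVacantComponent G p 0 (δ * Real.log N)) ≤
      Real.exp (-(1 / 2) * Real.log N) := by
  have hx0 : 0 < x := by linarith
  have hx1' : 1 ≤ x := by linarith
  have hd2 : 2 ≤ d := by
    have : (2 : ℝ) ≤ d := by
      rw [hx]
      calc (2 : ℝ) ≤ x ^ 1 := by linarith
        _ ≤ x ^ 10 := pow_le_pow_right₀ hx1' (by norm_num)
    exact_mod_cast this
  have hd0 : (0 : ℝ) < d := by positivity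
  have hN1 : 1 ≤ N := by
    by_contra h
    push Not at h
    have : Real.log N ≤ 0 := Real.log_nonpos (by rw [hN]; positivity) h.le
    linarith
  have hN0 : 0 < N := by linarith
  obtain ⟨k, hk⟩ : ∃ k : ℕ, k = ⌈δ * Real.log N⌉₊ := ⟨_, rfl⟩
  have hδl : 0 < δ * Real.log N := by positivity
  have hk1 : 1 ≤ k := by rw [hk]; exact Nat.one_le_iff_ne_zero.2 (Nat.ceil_pos.2 hδl).ne'
  have hk0 : (0 : ℝ) < k := by exact_mod_cast hk1
  have hklo : δ * Real.log N ≤ k := by rw [hk]; exact Nat.le_ceil _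
  have hkhi : (k : ℝ) ≤ (δ + 1) * Real.log N := by
    have := (Nat.ceil_lt_add_one hδl.le).le
    rw [← hk] at this
    linarith
  obtain ⟨g, hg⟩ : ∃ g, g = c₁ / (d : ℝ) ^ ρ₁ := ⟨_, rfl⟩
  rw [← hg] at hgap
  have hg0 : 0 < g := by rw [hg]; positivity
  have hglo : c₁ / x ^ 30 ≤ g := by
    rw [hg]
    have : (d : ℝ) ^ ρ₁ ≤ x ^ 30 := by
      calc (d : ℝ) ^ ρ₁ ≤ (d : ℝ) ^ (3 : ℝ) :=
            Real.rpow_le_rpow_of_exponent_le (by rw [hx]; exact one_le_pow₀ hx1') hρ₁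
        _ = x ^ 30 := by
            rw [show (3 : ℝ) = ((3 : ℕ) : ℝ) by norm_num, Real.rpow_natCast, hx]; ring
    gcongr
  -- k / g ≤ N / x
  have hkg : k / g ≤ N / x := by
    have e1 : (k : ℝ) / g ≤ k / (c₁ / x ^ 30) := by gcongr
    have e2 : (k : ℝ) / (c₁ / x ^ 30) = k * x ^ 30 / c₁ := by field_simp
    rw [e2] at e1
    refine e1.trans ?_
    rw [div_le_div_iff₀ hc₁ hx0]
    have e3 : x ^ 50 * Real.log N ≤ c₂ ^ 5 * N := by
      have : (d : ℝ) ^ 5 = x ^ 50 := by rw [hx]; ring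
      rwa [this] at hdN
    have e4 : (δ + 1) * c₂ ^ 5 ≤ x * c₁ := by rwa [div_le_iff₀ hc₁] at hx2
    have e5 : k * x ^ 50 ≤ x * c₁ * N := by
      calc k * x ^ 50 ≤ (δ + 1) * Real.log N * x ^ 50 := by gcongr
        _ = (δ + 1) * (x ^ 50 * Real.log N) := by ring
        _ ≤ (δ + 1) * (c₂ ^ 5 * N) := by gcongr
        _ = ((δ + 1) * c₂ ^ 5) * N := by ring
        _ ≤ _ := by gcongr
    have e6 : k * x ^ 31 * x ≤ N * c₁ * x := by
      calc k * x ^ 31 * x = k * x ^ 32 := by ring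
        _ ≤ k * x ^ 50 := by gcongr <;> first | exact hx1' | norm_num
        _ ≤ _ := by linarith
    have := le_of_mul_le_mul_right e6 hx0
    linarith
  obtain ⟨κ, hκ⟩ : ∃ κ : ℝ, κ = k / N * (1 - 5 / x) := ⟨_, rfl⟩
  have h5x : 5 / x ≤ 1 := by rw [div_le_one hx0]; linarith
  have h5x0 : 0 < 5 / x := by positivity
  have hκ0 : 0 ≤ κ := by
    rw [hκ]; exact mul_nonneg (by positivity) (by linarith)
  have hκle : κ ≤ k / N := by
    rw [hκ]; exact mul_le_of_le_one_right (by positivity) (by linarith)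
  have hκg : κ ≤ g := by
    refine hκle.trans ?_
    rw [div_le_iff₀ hN0]
    have : k / g ≤ N := hkg.trans (div_le_self hN0.le hx1')
    rw [div_le_iff₀ hg0] at this
    linarith
  have hκN : κ * N ≤ k := by rwa [le_div_iff₀ hN0] at hκle
  have hmain : κ * (N + k / g) ≤ k * (1 - 1 / x) ^ 2 * (1 - 2 / x) := by
    calc κ * (N + k / g) ≤ κ * (N + N / x) := by gcongr
      _ = k * ((1 - 5 / x) * (1 + 1 / x)) := by rw [hκ]; field_simp
      _ ≤ k * ((1 - 1 / x) ^ 2 * (1 - 2 / x)) := by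
          refine mul_le_mul_of_nonneg_left ?_ hk0.le
          set z := 1 / x with hz
          have hz0 : 0 < z := by positivity
          have hz1 : z ≤ 1 / 11 := one_div_le_one_div_of_le (by norm_num) hx11
          have e5 : 5 / x = 5 * z := by rw [hz]; ring
          have e2 : 2 / x = 2 * z := by rw [hz]; ring
          rw [e5, e2]
          nlinarith [mul_pos hz0 hz0]
      _ = _ := by ring
  obtain ⟨r, hr⟩ : ∃ r : ℕ, r = 202 + ⌈Real.log (Real.log N)⌉₊ := ⟨_, rfl⟩
  have hLL0 : 0 ≤ Real.log (Real.log N) := Real.log_nonneg hlogN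
  have hr1 : (r : ℝ) ≤ 203 + y := by
    rw [hr]; push_cast
    have := (Nat.ceil_lt_add_one hLL0).le
    linarith
  have hcard : ((d : ℝ) + 1) ^ 20 * k < x ^ r := by
    have e1 : (d : ℝ) + 1 ≤ 2 * x ^ 10 := by
      rw [hx]; have := one_le_pow₀ hx1' (n := 10); linarith
    have e2 : Real.log N ≤ x ^ ⌈Real.log (Real.log N)⌉₊ := by
      calc Real.log N = Real.exp (Real.log (Real.log N)) := (Real.exp_log (by linarith)).symm
        _ ≤ Real.exp (⌈Real.log (Real.log N)⌉₊ * 1) := by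
            rw [mul_one]; exact Real.exp_le_exp.2 (Nat.le_ceil _)
        _ = Real.exp 1 ^ ⌈Real.log (Real.log N)⌉₊ := Real.exp_nat_mul _ _
        _ ≤ _ := by
            have := Real.exp_one_lt_d9
            gcongr; linarith
    have e0 : 0 < Real.log N := by linarith
    calc ((d : ℝ) + 1) ^ 20 * k ≤ (2 * x ^ 10) ^ 20 * ((δ + 1) * Real.log N) := by gcongr
      _ = x ^ 200 * Real.log N * (2 ^ 20 * (δ + 1)) := by ring
      _ < x ^ 200 * Real.log N * x := by gcongr
      _ ≤ x ^ 200 * Real.log N * x ^ 2 := by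
          gcongr
          calc x = x ^ 1 := (pow_one x).symm
            _ ≤ x ^ 2 := pow_le_pow_right₀ hx1' (by norm_num)
      _ = x ^ 202 * Real.log N := by ring
      _ ≤ x ^ 202 * x ^ ⌈Real.log (Real.log N)⌉₊ := by gcongr
      _ = x ^ r := by rw [hr, pow_add]
  have hx5' : 1 ≤ x ^ 5 := one_le_pow₀ hx1'
  have hgrow : (x + 1) * (ρ * r) ≤ x ^ 8 := by
    calc (x + 1) * (ρ * r) ≤ (2 * x) * (ρ * (204 * x ^ 5)) := by
          gcongr
          · linarith
          · linarith
      _ = 408 * ρ * x ^ 6 := by ring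
      _ ≤ x * x ^ 6 := by gcongr
      _ = x ^ 7 := by ring
      _ ≤ x ^ 8 := pow_le_pow_right₀ hx1' (by norm_num)
  have hτ : 2 * ((2 / x) ^ 20) ^ 2 ≤ 2 * g * (1 / x) ^ 2 := by
    have e1 : c₁ / x ^ 30 * (1 / x) ^ 2 ≤ g * (1 / x) ^ 2 := by gcongr
    have e2 : ((2 / x) ^ 20) ^ 2 ≤ c₁ / x ^ 30 * (1 / x) ^ 2 := by
      have e3 : ((2 / x) ^ 20) ^ 2 = 2 ^ 40 / x ^ 40 := by
        rw [← pow_mul, div_pow]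
      have e4 : c₁ / x ^ 30 * (1 / x) ^ 2 = (c₁ * x ^ 8) / x ^ 40 := by field_simp
      rw [e3, e4]
      gcongr
      rw [div_le_iff₀ hc₁] at hx1
      have : x * c₁ ≤ x ^ 8 * c₁ := by
        gcongr
        calc x = x ^ 1 := (pow_one x).symm
          _ ≤ x ^ 8 := pow_le_pow_right₀ hx1' (by norm_num)
      linarith
    linarith
  have hθ1 : 2 / x < 1 := by rw [div_lt_one hx0]; linarith
  have hfb := fixed_bound G d hd2 hconn hreg g hg0 hgap ε ρ hρ hP3 k hk1 _ hk 20 r (x ^ 8) x x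
    (2 / x) (1 / x) κ (by rw [hy]; nlinarith) hx0.le hgrow hcard hx0
    (by rw [hx]; apply le_of_eq; field_simp; norm_num) (by positivity) hθ1 (by positivity)
    (by rw [div_le_one hx0]; exact hx1') hτ hκ0 hκg (by rw [← hN]; exact hκN)
    (by rw [← hN]; exact hmain) u t
  refine hfb.trans ?_
  rw [← hN]
  -- final computation
  have hlogd : Real.log d = 10 * Real.log x := by rw [hx, Real.log_pow]; norm_num
  have hlx : 0 ≤ Real.log x := Real.log_nonneg hx1'
  have htk : k * (Real.log d + ε * Real.log d - 1) ≤ t * κ := by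
    have e1 : (1 + ε) * (N * Real.log d) * κ ≤ t * κ := by gcongr
    refine le_trans ?_ e1
    have e2 : (1 + ε) * (N * Real.log d) * κ = k * ((1 + ε) * (1 - 5 / x) * Real.log d) := by
      rw [hκ]; field_simp
    rw [e2]
    gcongr
    have e3 : (1 + ε) * (5 / x) * Real.log d ≤ 1 := by
      calc (1 + ε) * (5 / x) * Real.log d ≤ 2 * (5 / x) * Real.log d := by
            have : 0 ≤ Real.log d := by rw [hlogd]; positivity
            gcongr; linarith
        _ = 100 * Real.log x / x := by rw [hlogd]; ring
        _ ≤ 1 := by rwa [div_le_one hx0]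
    linarith
  have hsq : √N = Real.exp (1 / 2 * Real.log N) := by
    rw [Real.sqrt_eq_rpow, Real.rpow_def_of_pos hN0]; ring_nf
  have hNe : N = Real.exp (Real.log N) := (Real.exp_log hN0).symm
  have hde : (d : ℝ) = Real.exp (Real.log d) := (Real.exp_log hd0).symm
  have hall : N * (Real.exp 2 * d) ^ k * (Real.exp (-κ) ^ t * √N) =
      Real.exp (Real.log N + k * (2 + Real.log d) + (t * (-κ) + 1 / 2 * Real.log N)) := by
    rw [hsq, Real.exp_add, Real.exp_add, Real.exp_add, Real.exp_nat_mul, Real.exp_nat_mul,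
      Real.exp_add, ← hNe, ← hde]
  rw [hall]
  apply Real.exp_le_exp.2
  have hk2 : 2 * Real.log N ≤ k * (ε * Real.log d - 3) := by
    calc 2 * Real.log N = (δ * Real.log N) * (2 / δ) := by field_simp
      _ ≤ k * (ε * Real.log d - 3) := by
          have : 0 < 2 / δ := by positivity
          gcongr; linarith
  nlinarith

end VS

/-- **Theorem 1(b)**: for a sequence of connected `d`-regular graphs satisfying
P1–P3, if `t ≥ (1+ε) n ln d` then w.h.p. the vacant set of the first `t` steps
of the simple random walk induces no component with `δ log n` or more vertices.
(The `n`-th graph of the sequence has `n + 1` vertices.) -/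
theorem vacant_set_subcritical
    (G : ∀ n : ℕ, SimpleGraph (Fin (n + 1))) (d : ℕ → ℕ) (ε : ℕ → ℝ)
    (u : ∀ n : ℕ, Fin (n + 1)) (t : ℕ → ℕ)
    (hreg : ∀ n, (G n).IsRegularOfDegree (d n))
    (hconn : ∀ n, (G n).Connected)
    (hd : Tendsto (fun n => (d n : ℝ)) atTop atTop)
    (hε : ∀ n, 0 < ε n ∧ ε n < 1)
    (hεd : Tendsto (fun n => ε n * Real.log (d n)) atTop atTop)
    (hP1 : ∃ c₁ ρ₁ : ℝ, 0 < c₁ ∧ 0 < ρ₁ ∧ ρ₁ ≤ 3 ∧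
      ∀ n, SpectralGapLB (G n) (d n) (c₁ / (d n : ℝ) ^ ρ₁))
    (hP2a : Tendsto (fun n : ℕ => Real.log (Real.log ((n : ℝ) + 1)) ^ (2 / ε n) / (d n : ℝ))
      atTop (nhds 0))
    (hP2b : ∃ c₂ : ℝ, 0 < c₂ ∧ ∀ n, 1 ≤ n →
      (d n : ℝ) ≤ c₂ * (((n : ℝ) + 1) / Real.log ((n : ℝ) + 1)) ^ ((1 : ℝ) / 5))
    (hP3 : ∃ ρ₂ : ℝ, 0 < ρ₂ ∧ ∀ n, PropP3 (G n) (d n) (ε n) ρ₂)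
    (ht : ∀ n, (1 + ε n) * (((n : ℝ) + 1) * Real.log (d n)) ≤ (t n : ℝ)) :
    ∀ δ : ℝ, 0 < δ →
      Tendsto (fun n =>
        walkProb (simpleStep (G n) (d n)) (u n) (t n)
          (fun p => bigVacantComponent (G n) p 0 (δ * Real.log ((n : ℝ) + 1))))
        atTop (nhds 0) := by
  intro δ hδ
  obtain ⟨c₁, ρ₁, hc₁, hρ₁0, hρ₁, hgap⟩ := hP1
  obtain ⟨c₂, hc₂, hP2b⟩ := hP2b
  obtain ⟨ρ, hρ, hP3⟩ := hP3
  have hNt : Tendsto (fun n : ℕ => (n : ℝ) + 1) atTop atTop :=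
    tendsto_atTop_add_const_right _ _ tendsto_natCast_atTop_atTop
  have hlog : Tendsto (fun n : ℕ => Real.log ((n : ℝ) + 1)) atTop atTop :=
    Real.tendsto_log_atTop.comp hNt
  have hxt : Tendsto (fun n => (d n : ℝ) ^ ((1 : ℝ) / 10)) atTop atTop :=
    (tendsto_rpow_atTop (by norm_num)).comp hd
  have hlim : Tendsto (fun n : ℕ => Real.exp (-(1 / 2) * Real.log ((n : ℝ) + 1))) atTop (nhds 0) :=
    Real.tendsto_exp_atBot.comp (hlog.const_mul_atTop_of_neg (by norm_num))
  refine tendsto_of_tendsto_of_tendsto_of_le_of_le' tendsto_const_nhds hlim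
    (Eventually.of_forall fun n => VS.walkProb_nonneg _ (VS.simpleStep_nonneg _ _) _ _ _) ?_
  have hlx : ∀ᶠ x : ℝ in atTop, 100 * Real.log x ≤ x := by
    have := Real.isLittleO_log_id_atTop.bound (c := 1 / 100) (by norm_num)
    filter_upwards [this, eventually_ge_atTop (1 : ℝ)] with x hx h1
    rw [Real.norm_of_nonneg (Real.log_nonneg h1), id, Real.norm_of_nonneg (by linarith)] at hx
    linarith
  filter_upwards [hlog.eventually_ge_atTop 1, eventually_ge_atTop 1, hd.eventually_ge_atTop 1,
    hxt.eventually_ge_atTop 11, hxt.eventually_ge_atTop (2 ^ 40 / c₁),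
    hxt.eventually_ge_atTop ((δ + 1) * c₂ ^ 5 / c₁), hxt.eventually_gt_atTop (2 ^ 20 * (δ + 1)),
    hxt.eventually_ge_atTop (408 * ρ), hxt.eventually hlx,
    hεd.eventually_ge_atTop (3 + 2 / δ), hεd.eventually_ge_atTop (2 * Real.log 16),
    hP2a.eventually_le_const (zero_lt_one)] with n h1 hn hd1 hx11 hx1 hx2 hx3 hx4 hx5 hω hω16 hLL
  have hd0 : (0 : ℝ) < d n := by linarith
  obtain ⟨hε0, hε1⟩ := hε n
  have hlN0 : 0 < Real.log ((n : ℝ) + 1) := by linarith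
  have hN0 : (0 : ℝ) < (n : ℝ) + 1 := by positivity
  have hLL0 : 0 ≤ Real.log (Real.log ((n : ℝ) + 1)) := Real.log_nonneg h1
  refine VS.final_bound (G n) (d n) (hconn n) ?_ ((n : ℝ) + 1) ((d n : ℝ) ^ ((1 : ℝ) / 10))
    ((d n : ℝ) ^ (ε n / 2)) (ε n) c₁ ρ₁ c₂ ρ δ (by simp) ?_ hx11 h1 hc₁ hρ₁ (hgap n) hρ (hP3 n) hδ
    hc₂ hε0 hε1 ?_ ?_ ?_ ?_ ?_ hx1 hx2 hx3 hx4 hx5 hω (u n) (t n) (ht n)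
  · intro v
    have := hreg n v
    rw [← this, ← SimpleGraph.card_neighborFinset_eq_degree]
    congr 1
    ext w
    simp
  · rw [← Real.rpow_natCast, ← Real.rpow_mul hd0.le]; norm_num
  · have hb := hP2b n hn
    have h5 : (d n : ℝ) ^ 5 ≤
        (c₂ * (((n : ℝ) + 1) / Real.log ((n : ℝ) + 1)) ^ ((1 : ℝ) / 5)) ^ 5 := by gcongr
    have e : ((((n : ℝ) + 1) / Real.log ((n : ℝ) + 1)) ^ ((1 : ℝ) / 5)) ^ 5 =
        ((n : ℝ) + 1) / Real.log ((n : ℝ) + 1) := by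
      rw [← Real.rpow_natCast, ← Real.rpow_mul (by positivity)]; norm_num
    rw [mul_pow, e, ← mul_div_assoc, le_div_iff₀ hlN0] at h5
    exact h5
  · rw [← Real.rpow_natCast, ← Real.rpow_mul hd0.le]; congr 1; push_cast; ring
  · rw [Real.rpow_def_of_pos hd0]
    calc (16 : ℝ) = Real.exp (Real.log 16) := (Real.exp_log (by norm_num)).symm
      _ ≤ _ := Real.exp_le_exp.2 (by linarith)
  · rw [← Real.rpow_natCast, ← Real.rpow_mul hd0.le]
    exact Real.rpow_le_rpow_of_exponent_le hd1 (by norm_num; linarith)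
  · rw [div_le_one hd0] at hLL
    have h2 : (Real.log (Real.log ((n : ℝ) + 1)) ^ (2 / ε n)) ^ (ε n / 2) ≤
        (d n : ℝ) ^ (ε n / 2) := Real.rpow_le_rpow (by positivity) hLL (by positivity)
    rw [← Real.rpow_mul hLL0] at h2
    have e : 2 / ε n * (ε n / 2) = 1 := by field_simp
    rwa [e, Real.rpow_one] at h2

end
end

section
/- Let (G_n) be a sequence of connected d-regular simple graphs on n vertices with d = d(n) → ∞ and ε = ε(n) ∈ (0,1), satisfying properties P1, P2 and P3. Then there exist a constant C and n₀ such that for all n ≥ n₀ and every vertex v of G_n, the expected number of visits to v within the mixing time by the lazy walk started at v satisfies |R_v − 2 − 2/d| ≤ C/d². -/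
open Finset Filter

noncomputable section
open scoped Classical

variable {V : Type*} [Fintype V] [DecidableEq V]

section Helpers
open Matrix

set_option linter.unusedSectionVars false

/-- `P` is a symmetric stochastic matrix. -/
structure SymStoch (P : Matrix V V ℝ) : Prop where
  symm : Pᵀ = P
  nonneg : ∀ i j, 0 ≤ P i j
  row : ∀ i, ∑ j, P i j = 1

lemma SymStoch.apply_symm {P : Matrix V V ℝ} (h : SymStoch P) (i j : V) : P i j = P j i := by
  conv_lhs => rw [← h.symm]
  rfl

lemma SymStoch.col {P : Matrix V V ℝ} (h : SymStoch P) (j : V) : ∑ i, P i j = 1 := by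
  rw [← h.row j]
  exact Finset.sum_congr rfl fun i _ => h.apply_symm i j

lemma SymStoch.one : SymStoch (1 : Matrix V V ℝ) where
  symm := by simp
  nonneg i j := by
    rw [Matrix.one_apply]
    split_ifs <;> norm_num
  row i := by simp [Matrix.one_apply]

/-- nonnegative entries and unit column sums are preserved under products -/
lemma mul_nonneg_entries {P Q : Matrix V V ℝ} (hP : ∀ i j, 0 ≤ P i j) (hQ : ∀ i j, 0 ≤ Q i j)
    (i j : V) : 0 ≤ (P * Q) i j := by
  rw [Matrix.mul_apply]
  exact Finset.sum_nonneg fun k _ => mul_nonneg (hP _ _) (hQ _ _)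

lemma mul_row_sum {P Q : Matrix V V ℝ} (hP : ∀ i, ∑ j, P i j = 1) (hQ : ∀ i, ∑ j, Q i j = 1)
    (i : V) : ∑ j, (P * Q) i j = 1 := by
  simp only [Matrix.mul_apply]
  rw [Finset.sum_comm]
  simp only [← Finset.mul_sum, hQ, mul_one, hP]

lemma SymStoch.mul_of_commute {P Q : Matrix V V ℝ} (hP : SymStoch P) (hQ : SymStoch Q)
    (hc : P * Q = Q * P) : SymStoch (P * Q) where
  symm := by rw [Matrix.transpose_mul, hP.symm, hQ.symm, hc]
  nonneg := mul_nonneg_entries hP.nonneg hQ.nonneg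
  row := mul_row_sum hP.row hQ.row

lemma SymStoch.pow {P : Matrix V V ℝ} (hP : SymStoch P) (k : ℕ) : SymStoch (P ^ k) := by
  induction k with
  | zero => simpa using SymStoch.one
  | succ k ih =>
    rw [pow_succ]
    exact ih.mul_of_commute hP (by rw [← pow_succ, pow_succ'])

lemma SymStoch.lazy {P : Matrix V V ℝ} (hP : SymStoch P) :
    SymStoch ((2 : ℝ)⁻¹ • (1 + P)) where
  symm := by simp [hP.symm]
  nonneg i j := by
    have h1 := SymStoch.one.nonneg i j
    have h2 := hP.nonneg i j
    simp only [Matrix.smul_apply, Matrix.add_apply, smul_eq_mul]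
    positivity
  row i := by
    have h1 := (SymStoch.one (V := V)).row i
    have h2 := hP.row i
    simp only [Matrix.smul_apply, Matrix.add_apply, smul_eq_mul]
    rw [← Finset.mul_sum, Finset.sum_add_distrib, h1, h2]
    norm_num

lemma SymStoch.dot_mulVec {P : Matrix V V ℝ} (hP : SymStoch P) (x y : V → ℝ) :
    (P *ᵥ x) ⬝ᵥ y = x ⬝ᵥ (P *ᵥ y) := by
  rw [Matrix.dotProduct_mulVec, ← Matrix.mulVec_transpose, hP.symm]

lemma SymStoch.contract {P : Matrix V V ℝ} (hP : SymStoch P) (y : V → ℝ) :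
    (P *ᵥ y) ⬝ᵥ (P *ᵥ y) ≤ y ⬝ᵥ y := by
  have h1 : ∀ u, (P *ᵥ y) u * (P *ᵥ y) u ≤ ∑ w, P u w * (y w * y w) := by
    intro u
    have := Finset.sum_sq_le_sum_mul_sum_of_sq_le_mul (Finset.univ : Finset V)
      (r := fun w => P u w * y w) (f := fun w => P u w) (g := fun w => P u w * (y w * y w))
      (fun i _ => hP.nonneg _ _) (fun i _ => mul_nonneg (hP.nonneg _ _) (mul_self_nonneg _))
      (fun i _ => le_of_eq (by ring))
    rw [hP.row, one_mul] at this
    simpa [Matrix.mulVec, dotProduct, sq] using this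
  calc (P *ᵥ y) ⬝ᵥ (P *ᵥ y) ≤ ∑ u, ∑ w, P u w * (y w * y w) :=
        Finset.sum_le_sum fun u _ => h1 u
    _ = y ⬝ᵥ y := by
        rw [Finset.sum_comm]
        simp only [← Finset.sum_mul, hP.col, one_mul, dotProduct]

lemma SymStoch.sum_mulVec {P : Matrix V V ℝ} (hP : SymStoch P) (y : V → ℝ) :
    ∑ u, (P *ᵥ y) u = ∑ u, y u := by
  simp only [Matrix.mulVec, dotProduct]
  rw [Finset.sum_comm]
  simp only [← Finset.sum_mul, hP.col, one_mul]

lemma lazy_sq_le {P : Matrix V V ℝ} (hP : SymStoch P) (y : V → ℝ) :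
    (((2 : ℝ)⁻¹ • (1 + P)) *ᵥ y) ⬝ᵥ (((2 : ℝ)⁻¹ • (1 + P)) *ᵥ y) ≤
      y ⬝ᵥ (((2 : ℝ)⁻¹ • (1 + P)) *ᵥ y) := by
  have h := hP.contract y
  have e : ((2 : ℝ)⁻¹ • (1 + P)) *ᵥ y = (2 : ℝ)⁻¹ • (y + P *ᵥ y) := by
    rw [Matrix.smul_mulVec, Matrix.add_mulVec, Matrix.one_mulVec]
  rw [e]
  have hc : (P *ᵥ y) ⬝ᵥ y = y ⬝ᵥ (P *ᵥ y) := dotProduct_comm _ _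
  simp only [smul_dotProduct, dotProduct_smul, add_dotProduct, dotProduct_add, smul_eq_mul, hc]
  linarith

/-- gap hypothesis for a matrix -/
def GapLB (M : Matrix V V ℝ) (g : ℝ) : Prop :=
  ∀ x : V → ℝ, (∑ v, x v) = 0 → x ⬝ᵥ (M *ᵥ x) ≤ (1 - g) * (x ⬝ᵥ x)

section gap
variable {P M : Matrix V V ℝ} {g : ℝ}

lemma quad_split (hM : SymStoch M) (i j : ℕ) (x y : V → ℝ) :
    x ⬝ᵥ (M ^ (i + j) *ᵥ y) = (M ^ i *ᵥ x) ⬝ᵥ (M ^ j *ᵥ y) := by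
  rw [pow_add, (hM.pow i).dot_mulVec, Matrix.mulVec_mulVec]

lemma quad_even (hM : SymStoch M) (s : ℕ) (x : V → ℝ) :
    x ⬝ᵥ (M ^ (2 * s) *ᵥ x) = (M ^ s *ᵥ x) ⬝ᵥ (M ^ s *ᵥ x) := by
  rw [two_mul, quad_split hM]

lemma dot_self_nonneg' (x : V → ℝ) : 0 ≤ x ⬝ᵥ x :=
  Finset.sum_nonneg fun _ _ => mul_self_nonneg _

lemma quad_odd_le (hM : SymStoch M) (hg : GapLB M g) (s : ℕ) (x : V → ℝ) (hx : ∑ v, x v = 0) :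
    x ⬝ᵥ (M ^ (2 * s + 1) *ᵥ x) ≤ (1 - g) * (x ⬝ᵥ (M ^ (2 * s) *ᵥ x)) := by
  have h := hg (M ^ s *ᵥ x) (by rw [(hM.pow s).sum_mulVec, hx])
  rw [quad_even hM]
  have e : 2 * s + 1 = s + (s + 1) := by ring
  rw [e, quad_split hM, pow_succ', ← Matrix.mulVec_mulVec]
  exact h

lemma quad_even_le (hP : SymStoch P) (hMP : M = (2 : ℝ)⁻¹ • (1 + P)) (s : ℕ) (x : V → ℝ) :
    x ⬝ᵥ (M ^ (2 * (s + 1)) *ᵥ x) ≤ x ⬝ᵥ (M ^ (2 * s + 1) *ᵥ x) := by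
  have hM : SymStoch M := hMP ▸ hP.lazy
  rw [quad_even hM]
  have e : 2 * s + 1 = s + (s + 1) := by ring
  rw [e, quad_split hM s (s + 1), pow_succ', ← Matrix.mulVec_mulVec]
  have := lazy_sq_le hP (M ^ s *ᵥ x)
  rwa [← hMP] at this

lemma quad_nonneg (hP : SymStoch P) (hMP : M = (2 : ℝ)⁻¹ • (1 + P)) (k : ℕ) (x : V → ℝ) :
    0 ≤ x ⬝ᵥ (M ^ k *ᵥ x) := by
  have hM : SymStoch M := hMP ▸ hP.lazy
  rcases Nat.even_or_odd' k with ⟨s, rfl | rfl⟩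
  · rw [quad_even hM]; exact dot_self_nonneg' _
  · refine le_trans ?_ (quad_even_le hP hMP s x)
    rw [quad_even hM]; exact dot_self_nonneg' _

lemma quad_sum_le (hP : SymStoch P) (hMP : M = (2 : ℝ)⁻¹ • (1 + P)) (hg : GapLB M g)
    (hg0 : 0 < g) (x : V → ℝ) (hx : ∑ v, x v = 0) (s : ℕ) :
    ∑ k ∈ Finset.range (2 * s), x ⬝ᵥ (M ^ k *ᵥ x) ≤
      2 / g * (x ⬝ᵥ x - x ⬝ᵥ (M ^ (2 * s) *ᵥ x)) := by
  have hM : SymStoch M := hMP ▸ hP.lazy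
  induction s with
  | zero => simp
  | succ s ih =>
    have e : 2 * (s + 1) = 2 * s + 1 + 1 := by ring
    have h1 := quad_odd_le hM hg s x hx
    have h2 := quad_even_le hP hMP s x
    have h3 := quad_nonneg hP hMP (2 * s) x
    rw [e] at h2 ⊢
    rw [Finset.sum_range_succ, Finset.sum_range_succ]
    generalize x ⬝ᵥ (M ^ (2 * s) *ᵥ x) = a at *
    generalize x ⬝ᵥ (M ^ (2 * s + 1) *ᵥ x) = b at *
    generalize x ⬝ᵥ (M ^ (2 * s + 1 + 1) *ᵥ x) = c at *
    have h4 : a + b ≤ 2 / g * (a - c) := by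
      rw [div_mul_eq_mul_div, le_div_iff₀ hg0]
      have h6 : 0 ≤ g * a := mul_nonneg hg0.le h3
      have h7 : b ≤ a := by linarith
      have h8 : b * g ≤ a * g := mul_le_mul_of_nonneg_right h7 hg0.le
      linarith
    have h5 : 2 / g * (x ⬝ᵥ x - c) = 2 / g * (x ⬝ᵥ x - a) + 2 / g * (a - c) := by ring
    linarith

lemma quad_sum_le' (hP : SymStoch P) (hMP : M = (2 : ℝ)⁻¹ • (1 + P)) (hg : GapLB M g)
    (hg0 : 0 < g) (x : V → ℝ) (hx : ∑ v, x v = 0) (K : ℕ) :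
    ∑ k ∈ Finset.range K, x ⬝ᵥ (M ^ k *ᵥ x) ≤ 2 / g * (x ⬝ᵥ x) := by
  have h1 : ∑ k ∈ Finset.range K, x ⬝ᵥ (M ^ k *ᵥ x) ≤
      ∑ k ∈ Finset.range (2 * K), x ⬝ᵥ (M ^ k *ᵥ x) :=
    Finset.sum_le_sum_of_subset_of_nonneg (Finset.range_mono (by omega))
      fun k _ _ => quad_nonneg hP hMP k x
  have h2 := quad_sum_le hP hMP hg hg0 x hx K
  have h3 := quad_nonneg hP hMP (2 * K) x
  have h4 : 2 / g * (x ⬝ᵥ x - x ⬝ᵥ (M ^ (2 * K) *ᵥ x)) ≤ 2 / g * (x ⬝ᵥ x) := by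
    have : 0 < 2 / g := by positivity
    gcongr
    linarith
  linarith

lemma quad_even_decay (hP : SymStoch P) (hMP : M = (2 : ℝ)⁻¹ • (1 + P)) (hg : GapLB M g)
    (hg1 : g ≤ 1) (x : V → ℝ) (hx : ∑ v, x v = 0) (s : ℕ) :
    x ⬝ᵥ (M ^ (2 * s) *ᵥ x) ≤ (1 - g) ^ s * (x ⬝ᵥ x) := by
  have hM : SymStoch M := hMP ▸ hP.lazy
  induction s with
  | zero => simp
  | succ s ih =>
    have h1 := quad_odd_le hM hg s x hx
    have h2 := quad_even_le hP hMP s x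
    rw [pow_succ']
    have h3 := mul_le_mul_of_nonneg_left ih (sub_nonneg.2 hg1)
    linarith

/-- the centred row `P^j e_v - 1/n`. -/
def cvec (Q : Matrix V V ℝ) (v : V) : V → ℝ := fun w => Q w v - ((Fintype.card V : ℝ))⁻¹

lemma cvec_sum [Nonempty V] {Q : Matrix V V ℝ} (hQ : SymStoch Q) (v : V) :
    ∑ w, cvec Q v w = 0 := by
  have : (Fintype.card V : ℝ) ≠ 0 := by exact_mod_cast Fintype.card_ne_zero
  simp only [cvec, Finset.sum_sub_distrib, hQ.col]
  simp [this]

lemma cvec_mulVec {Q R : Matrix V V ℝ} (hR : SymStoch R) (v : V) :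
    R *ᵥ cvec Q v = cvec (R * Q) v := by
  funext w
  simp only [Matrix.mulVec, dotProduct, cvec, mul_sub, Finset.sum_sub_distrib, ← Finset.sum_mul,
    hR.row, one_mul, Matrix.mul_apply]

lemma cvec_dot [Nonempty V] {Q R : Matrix V V ℝ} (hQ : SymStoch Q) (hR : SymStoch R) (u v : V) :
    cvec Q u ⬝ᵥ cvec R v = (Q * R) u v - ((Fintype.card V : ℝ))⁻¹ := by
  have hc : (Fintype.card V : ℝ) ≠ 0 := by exact_mod_cast Fintype.card_ne_zero
  have h1 : ∀ w, cvec Q u w * cvec R v w =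
      Q u w * R w v - (Q w u * ((Fintype.card V : ℝ))⁻¹) - ((Fintype.card V : ℝ))⁻¹ * cvec R v w := by
    intro w
    simp only [cvec]
    rw [hQ.apply_symm u w]
    ring
  simp only [dotProduct]
  rw [Finset.sum_congr rfl fun w _ => h1 w, Finset.sum_sub_distrib, Finset.sum_sub_distrib,
    ← Finset.mul_sum, cvec_sum hR, ← Finset.sum_mul, hQ.col, Matrix.mul_apply]
  ring

lemma cs_dot (x y : V → ℝ) : (x ⬝ᵥ y) ^ 2 ≤ (x ⬝ᵥ x) * (y ⬝ᵥ y) := by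
  simpa [dotProduct, sq] using Finset.sum_mul_sq_le_sq_mul_sq Finset.univ x y

lemma mix_bound [Nonempty V] (hP : SymStoch P) (hMP : M = (2 : ℝ)⁻¹ • (1 + P)) (hg : GapLB M g)
    (hg1 : g ≤ 1) (s : ℕ) (u v : V) :
    |(M ^ (2 * s)) u v - ((Fintype.card V : ℝ))⁻¹| ≤ (1 - g) ^ s := by
  have hM : SymStoch M := hMP ▸ hP.lazy
  have hn : 0 ≤ (1 - g) ^ s := pow_nonneg (sub_nonneg.2 hg1) _
  have key : ∀ w : V, cvec (M ^ s) w ⬝ᵥ cvec (M ^ s) w ≤ (1 - g) ^ s := by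
    intro w
    have h := quad_even_decay hP hMP hg hg1 (cvec 1 w) (cvec_sum SymStoch.one w) s
    rw [quad_even hM, cvec_mulVec (hM.pow s), mul_one, cvec_dot SymStoch.one SymStoch.one] at h
    have hc : (0 : ℝ) ≤ ((Fintype.card V : ℝ))⁻¹ := by positivity
    rw [mul_one, Matrix.one_apply_eq] at h
    nlinarith
  have h := cs_dot (cvec (M ^ s) u) (cvec (M ^ s) v)
  rw [cvec_dot (hM.pow s) (hM.pow s), ← pow_add, ← two_mul] at h
  have h2 : (cvec (M ^ s) u ⬝ᵥ cvec (M ^ s) u) * (cvec (M ^ s) v ⬝ᵥ cvec (M ^ s) v) ≤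
      (1 - g) ^ s * (1 - g) ^ s :=
    mul_le_mul (key u) (key v) (dot_self_nonneg' _) hn
  exact abs_le_of_sq_le_sq (by nlinarith) hn

lemma green_tail [Nonempty V] (hP : SymStoch P) (hMP : M = (2 : ℝ)⁻¹ • (1 + P)) (hg : GapLB M g)
    (hg0 : 0 < g) (m K : ℕ) (v : V) :
    ∑ k ∈ Finset.range K, (M ^ k * P ^ (2 * m)) v v ≤
      K * ((Fintype.card V : ℝ))⁻¹ + 2 / g * (P ^ (2 * m)) v v := by
  have hM : SymStoch M := hMP ▸ hP.lazy
  have hcomm : Commute M P := by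
    rw [hMP]
    exact ((Commute.one_left P).add_left (Commute.refl P)).smul_left _
  have h := quad_sum_le' hP hMP hg hg0 (cvec (P ^ m) v) (cvec_sum (hP.pow m) v) K
  have e : ∀ k, cvec (P ^ m) v ⬝ᵥ (M ^ k *ᵥ cvec (P ^ m) v) =
      (M ^ k * P ^ (2 * m)) v v - ((Fintype.card V : ℝ))⁻¹ := by
    intro k
    have hc : M ^ k * P ^ m = P ^ m * M ^ k := (hcomm.pow_pow k m)
    rw [cvec_mulVec (hM.pow k), cvec_dot (hP.pow m) ((hM.pow k).mul_of_commute (hP.pow m) hc),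
      ← mul_assoc, ← hc, mul_assoc, ← pow_add, two_mul]
  have e2 : cvec (P ^ m) v ⬝ᵥ cvec (P ^ m) v = (P ^ (2 * m)) v v - ((Fintype.card V : ℝ))⁻¹ := by
    rw [cvec_dot (hP.pow m) (hP.pow m), ← pow_add, two_mul]
  simp only [e, e2, Finset.sum_sub_distrib, Finset.sum_const, Finset.card_range, nsmul_eq_mul] at h
  have h3 : 2 / g * ((P ^ (2 * m)) v v - ((Fintype.card V : ℝ))⁻¹) ≤ 2 / g * (P ^ (2 * m)) v v := by
    have : 0 < 2 / g := by positivity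
    have : 0 ≤ ((Fintype.card V : ℝ))⁻¹ := by positivity
    gcongr
    linarith
  linarith

lemma green_identity (hMP : M = (2 : ℝ)⁻¹ • (1 + P)) (m K : ℕ) :
    ∑ k ∈ Finset.range K, M ^ k = (2 : ℝ) • (∑ j ∈ Finset.range m, P ^ j)
      - (2 : ℝ) • (∑ j ∈ Finset.range m, M ^ K * P ^ j)
      + ∑ k ∈ Finset.range K, M ^ k * P ^ m := by
  have hA : (∑ k ∈ Finset.range K, M ^ k) * (1 - M) = 1 - M ^ K := geom_sum_mul_neg M K
  have hB : (1 - P) * (∑ j ∈ Finset.range m, P ^ j) = 1 - P ^ m := mul_neg_geom_sum P m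
  have hC : 1 - P = (2 : ℝ) • (1 - M) := by
    rw [hMP, smul_sub, smul_smul]
    norm_num
    rw [two_smul]
    abel
  have h1 : (∑ k ∈ Finset.range K, M ^ k) * (1 - P ^ m) =
      (2 : ℝ) • ((1 - M ^ K) * ∑ j ∈ Finset.range m, P ^ j) := by
    rw [← hB, hC, ← mul_assoc, mul_smul_comm, hA, smul_mul_assoc]
  rw [mul_sub, mul_one, Finset.sum_mul, sub_mul, one_mul, Finset.mul_sum, smul_sub] at h1
  rw [← h1]
  abel

end gap


section graph
variable {G : SimpleGraph V} {d : ℕ}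

lemma simpleStep_symStoch (hd : 1 ≤ d) (hreg : ∀ v, ((univ : Finset V).filter fun w => G.Adj v w).card = d) :
    SymStoch (simpleStep G d) where
  symm := by
    ext i j
    simp [simpleStep, G.adj_comm]
  nonneg i j := by
    simp only [simpleStep, Matrix.of_apply]
    split_ifs <;> positivity
  row i := by
    have hd' : (d : ℝ) ≠ 0 := by positivity
    simp only [simpleStep, Matrix.of_apply]
    rw [← Finset.sum_filter, Finset.sum_const, hreg i, nsmul_eq_mul, mul_inv_cancel₀ hd']

lemma lazyStep_eq : lazyStep G d = (2 : ℝ)⁻¹ • (1 + simpleStep G d) := by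
  ext i j
  simp only [lazyStep, simpleStep, Matrix.of_apply, Matrix.smul_apply, Matrix.add_apply,
    Matrix.one_apply, smul_eq_mul, mul_add]
  congr 1
  split_ifs <;> simp

lemma gapLB_of_spectral {g g' : ℝ} (h : SpectralGapLB G d g) (hg : g' ≤ g) :
    GapLB (lazyStep G d) g' := by
  intro x hx
  have h1 := h x hx
  have e1 : x ⬝ᵥ (lazyStep G d *ᵥ x) = ∑ u : V, ∑ v : V, x u * lazyStep G d u v * x v := by
    simp only [dotProduct, Matrix.mulVec, Finset.mul_sum, mul_assoc]
  have e2 : x ⬝ᵥ x = ∑ v, x v ^ 2 := by simp [dotProduct, sq]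
  rw [e1, e2]
  refine h1.trans ?_
  have : 0 ≤ ∑ v, x v ^ 2 := Finset.sum_nonneg fun _ _ => sq_nonneg _
  gcongr

lemma pow_eq_zero_of_dist (hconn : G.Connected) (u : V) (t : ℕ) :
    ∀ w, t < G.dist w u → ((simpleStep G d) ^ t) w u = 0 := by
  induction t with
  | zero =>
    intro w hw
    have : w ≠ u := by
      rintro rfl
      simp at hw
    simp [this]
  | succ t ih =>
    intro w hw
    rw [pow_succ', Matrix.mul_apply]
    refine Finset.sum_eq_zero fun w' _ => ?_
    by_cases ha : G.Adj w w'
    · have h1 := hconn.dist_triangle (u := w) (v := w') (w := u)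
      have h2 : G.dist w w' = 1 := SimpleGraph.dist_eq_one_iff_adj.2 ha
      rw [ih w' (by omega), mul_zero]
    · simp [simpleStep, ha]

lemma return_bound (hconn : G.Connected) (hd : 1 ≤ d)
    (hP : SymStoch (simpleStep G d)) {ε ρ : ℝ} (hρ : 0 < ρ) (h3 : PropP3 G d ε ρ)
    (K : ℕ) (hK : (K : ℝ) ≤ (d : ℝ) ^ ε) (u : V) (t : ℕ) :
    t ≤ K → ∀ w, ((simpleStep G d) ^ t) w u * (d : ℝ) ^ ((t + G.dist w u + 1) / 2) ≤
      (1 + ρ * K) ^ t := by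
  have hd1 : (1 : ℝ) ≤ d := by exact_mod_cast hd
  have hd0 : (0 : ℝ) < d := by linarith
  induction t with
  | zero =>
    intro _ w
    by_cases h : w = u
    · subst h; simp
    · simp [h]
  | succ t ih =>
    intro ht w
    have ih := ih (by omega)
    set C : ℝ := (1 + ρ * K) ^ t with hC
    have hC0 : 0 ≤ C := by positivity
    by_cases hj : t + 1 < G.dist w u
    · rw [pow_eq_zero_of_dist hconn u (t + 1) w hj, zero_mul]
      positivity
    push Not at hj
    set j := G.dist w u with hjdef
    have hjK : (j : ℝ) ≤ K := by exact_mod_cast hj.trans ht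
    have hcount := h3 u w (by rw [SimpleGraph.dist_comm]; exact hjK.trans hK)
    rw [SimpleGraph.dist_comm, ← hjdef] at hcount
    rw [pow_succ', Matrix.mul_apply, Finset.sum_mul]
    have hterm : ∀ w', simpleStep G d w w' * ((simpleStep G d) ^ t) w' u *
        (d : ℝ) ^ ((t + 1 + j + 1) / 2) ≤
        C * (if G.Adj w w' ∧ G.dist w' u ≤ j then 1 else 0) + C * simpleStep G d w w' := by
      intro w'
      have hn := hP.nonneg w w'
      have hq := (hP.pow t).nonneg w' u
      have hi := ih w'
      by_cases ha : G.Adj w w'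
      · have h1 := hconn.dist_triangle (u := w) (v := w') (w := u)
        have h2 : G.dist w w' = 1 := SimpleGraph.dist_eq_one_iff_adj.2 ha
        have hs : simpleStep G d w w' = (d : ℝ)⁻¹ := by simp [simpleStep, ha]
        by_cases hle : G.dist w' u ≤ j
        · rw [if_pos ⟨ha, hle⟩]
          have hexp : (d : ℝ) ^ ((t + 1 + j + 1) / 2) ≤
              d * (d : ℝ) ^ ((t + G.dist w' u + 1) / 2) := by
            rw [← pow_succ']
            exact pow_le_pow_right₀ hd1 (by omega)
          have : simpleStep G d w w' * ((simpleStep G d) ^ t) w' u *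
              (d : ℝ) ^ ((t + 1 + j + 1) / 2) ≤ C := by
            calc _ ≤ simpleStep G d w w' * ((simpleStep G d) ^ t) w' u *
                  (d * (d : ℝ) ^ ((t + G.dist w' u + 1) / 2)) := by
                  gcongr
              _ = ((simpleStep G d) ^ t) w' u * (d : ℝ) ^ ((t + G.dist w' u + 1) / 2) := by
                  rw [hs]; field_simp
              _ ≤ C := hi
          have := mul_nonneg hC0 hn
          linarith
        · have hexp : (d : ℝ) ^ ((t + 1 + j + 1) / 2) ≤
              (d : ℝ) ^ ((t + G.dist w' u + 1) / 2) :=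
            pow_le_pow_right₀ hd1 (by omega)
          rw [if_neg (by tauto), mul_zero, zero_add, mul_assoc, mul_comm C]
          refine mul_le_mul_of_nonneg_left (le_trans ?_ hi) hn
          gcongr
      · have hs : simpleStep G d w w' = 0 := by simp [simpleStep, ha]
        rw [hs, if_neg (by tauto)]
        simp
    calc _ ≤ ∑ w', (C * (if G.Adj w w' ∧ G.dist w' u ≤ j then 1 else 0)
            + C * simpleStep G d w w') := Finset.sum_le_sum fun w' _ => hterm w'
      _ = C * (((univ : Finset V).filter fun w' => G.Adj w w' ∧ G.dist w' u ≤ j).card : ℝ) + C := by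
          rw [Finset.sum_add_distrib, ← Finset.mul_sum, ← Finset.mul_sum, hP.row, mul_one,
            Finset.sum_boole]
      _ ≤ C * (ρ * K) + C := by
          have : ρ * (j : ℝ) ≤ ρ * K := mul_le_mul_of_nonneg_left hjK hρ.le
          have := mul_le_mul_of_nonneg_left (hcount.trans this) hC0
          convert add_le_add_left this C using 3
      _ = (1 + ρ * K) ^ (t + 1) := by rw [pow_succ, ← hC]; ring

lemma mixing_spec [Nonempty V] (hP : SymStoch (simpleStep G d)) {g : ℝ} (hg0 : 0 < g)
    (hg1 : g ≤ 1) (hg : GapLB (lazyStep G d) g) (hN : 1 ≤ Real.log (Fintype.card V)) :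
    (∀ x y : V, |((lazyStep G d) ^ (mixingTime G d)) x y - ((Fintype.card V : ℝ))⁻¹| ≤
      (((Fintype.card V : ℝ)) ^ 3)⁻¹) ∧
    (mixingTime G d : ℝ) ≤ 6 * Real.log (Fintype.card V) / g + 2 := by
  have hN0 : (0 : ℝ) < Fintype.card V := by exact_mod_cast Fintype.card_pos
  set L := Real.log (Fintype.card V) with hL
  set s := ⌈3 * L / g⌉₊ with hs
  have hpos : 0 < 3 * L / g := by positivity
  have hs1 : 1 ≤ s := Nat.one_le_ceil_iff.2 hpos
  have hs2 : 3 * L / g ≤ s := Nat.le_ceil _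
  have hs3 : (s : ℝ) < 3 * L / g + 1 := Nat.ceil_lt_add_one hpos.le
  have hdecay : (1 - g) ^ s ≤ (((Fintype.card V : ℝ)) ^ 3)⁻¹ := by
    have h1 : (1 - g) ^ s ≤ Real.exp (-g) ^ s :=
      pow_le_pow_left₀ (by linarith) (by linarith [Real.add_one_le_exp (-g)]) _
    have h2 : Real.exp (-g) ^ s = Real.exp (-(g * s)) := by
      rw [← Real.exp_nat_mul]; congr 1; ring
    have h3 : (((Fintype.card V : ℝ)) ^ 3)⁻¹ = Real.exp (-(3 * L)) := by
      rw [Real.exp_neg]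
      congr 1
      have : Real.exp (3 * L) = Real.exp L ^ 3 := by rw [← Real.exp_nat_mul]; norm_num
      rw [this, hL, Real.exp_log hN0]
    rw [h2] at h1
    rw [h3]
    refine h1.trans (Real.exp_le_exp.2 ?_)
    rw [div_le_iff₀ hg0] at hs2
    linarith
  have hmem : 2 * s ∈ {T : ℕ | 1 ≤ T ∧ ∀ x y : V,
      |((lazyStep G d) ^ T) x y - ((Fintype.card V : ℝ))⁻¹| ≤ (((Fintype.card V : ℝ)) ^ 3)⁻¹} :=
    ⟨by omega, fun x y => (mix_bound hP lazyStep_eq hg hg1 s x y).trans hdecay⟩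
  refine ⟨(Nat.sInf_mem ⟨_, hmem⟩).2, ?_⟩
  have h1 : mixingTime G d ≤ 2 * s := Nat.sInf_le hmem
  have h2 : (mixingTime G d : ℝ) ≤ 2 * s := by exact_mod_cast h1
  have h3 : 6 * L / g = 2 * (3 * L / g) := by ring
  rw [h3]
  linarith

lemma main_estimate [Nonempty V] (hconn : G.Connected) (hd : 1 ≤ d)
    (hreg : ∀ v, ((univ : Finset V).filter fun w => G.Adj v w).card = d)
    {ε ρ : ℝ} (hρ : 0 < ρ) (h3 : PropP3 G d ε ρ)
    (hK : (10 : ℝ) ≤ (d : ℝ) ^ ε) {c B : ℝ} (hc0 : 0 < c) (hc1 : c ≤ 1)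
    (hgap : GapLB (lazyStep G d) (c / (d : ℝ) ^ 3))
    (hN : 1 ≤ Real.log (Fintype.card V))
    (hB : (d : ℝ) ^ 5 * Real.log (Fintype.card V) ≤ B * (Fintype.card V : ℝ)) (v : V) :
    |(∑ k ∈ Finset.range (mixingTime G d + 1), ((lazyStep G d) ^ k) v v) - 2 - 2 / (d : ℝ)| ≤
      (14 * (1 + ρ * 10) ^ 10 + (6 / c + 3) * B + 2 / c * (1 + ρ * 10) ^ 10 + 40 * B)
        / (d : ℝ) ^ 2 := by
  have hP := simpleStep_symStoch (G := G) hd hreg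
  have hM : SymStoch (lazyStep G d) := lazyStep_eq (G := G) (d := d) ▸ hP.lazy
  have hd1 : (1 : ℝ) ≤ d := by exact_mod_cast hd
  have hd0 : (0 : ℝ) < d := by linarith
  have hd3 : (1 : ℝ) ≤ (d : ℝ) ^ 3 := one_le_pow₀ hd1
  have hg0 : 0 < c / (d : ℝ) ^ 3 := by positivity
  have hg1 : c / (d : ℝ) ^ 3 ≤ 1 := by
    rw [div_le_one (by positivity)]; linarith
  obtain ⟨hmix, hT⟩ := mixing_spec hP hg0 hg1 hgap hN
  set T := mixingTime G d with hTdef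
  set N : ℝ := (Fintype.card V : ℝ) with hNdef
  have hN0 : (0 : ℝ) < N := by rw [hNdef]; exact_mod_cast Fintype.card_pos
  have hN1 : (1 : ℝ) ≤ N := by rw [hNdef]; exact_mod_cast Fintype.card_pos (α := V)
  set L := Real.log N with hLdef
  set Q : ℝ := (1 + ρ * 10) ^ 10 with hQ
  -- return probabilities
  have hret : ∀ t ≤ 10, ((simpleStep G d) ^ t) v v * (d : ℝ) ^ ((t + 1) / 2) ≤ Q := by
    intro t ht
    have h := return_bound hconn hd hP hρ h3 10 (by exact_mod_cast hK) v t ht v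
    rw [SimpleGraph.dist_self, add_zero] at h
    refine h.trans ?_
    push_cast
    exact pow_le_pow_right₀ (by linarith) ht
  have hret2 : ∀ t, 3 ≤ t → t ≤ 10 → ((simpleStep G d) ^ t) v v ≤ Q / (d : ℝ) ^ 2 := by
    intro t h1 h2
    rw [le_div_iff₀ (by positivity)]
    refine le_trans ?_ (hret t h2)
    refine mul_le_mul_of_nonneg_left ?_ ((hP.pow t).nonneg _ _)
    exact pow_le_pow_right₀ hd1 (by omega)
  have hp1 : (simpleStep G d) v v = 0 := by simp [simpleStep]
  have hp2 : ((simpleStep G d) ^ 2) v v = (d : ℝ)⁻¹ := by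
    rw [pow_two, Matrix.mul_apply]
    have : ∀ w, simpleStep G d v w * simpleStep G d w v = simpleStep G d v w * (d : ℝ)⁻¹ := by
      intro w
      rw [hP.apply_symm w v]
      simp only [simpleStep, Matrix.of_apply]
      split_ifs <;> simp
    rw [Finset.sum_congr rfl fun w _ => this w, ← Finset.sum_mul, hP.row, one_mul]
  have hsumP : ∑ j ∈ Finset.range 10, ((simpleStep G d) ^ j) v v =
      1 + (d : ℝ)⁻¹ + ∑ j ∈ Finset.Ico 3 10, ((simpleStep G d) ^ j) v v := by
    rw [← Finset.sum_range_add_sum_Ico _ (show 3 ≤ 10 by norm_num)]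
    congr 1
    simp [Finset.sum_range_succ, hp1, hp2]
  have hrest0 : 0 ≤ ∑ j ∈ Finset.Ico 3 10, ((simpleStep G d) ^ j) v v :=
    Finset.sum_nonneg fun j _ => (hP.pow j).nonneg _ _
  have hrest1 : ∑ j ∈ Finset.Ico 3 10, ((simpleStep G d) ^ j) v v ≤ 7 * (Q / (d : ℝ) ^ 2) := by
    have := Finset.sum_le_card_nsmul (Finset.Ico 3 10) (fun j => ((simpleStep G d) ^ j) v v)
      (Q / (d : ℝ) ^ 2) (fun j hj => by
        rw [Finset.mem_Ico] at hj
        exact hret2 j hj.1 (by omega))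
    simpa using this
  -- 1/N bounds
  have hNinv : L / N * (d : ℝ) ^ 3 ≤ B / (d : ℝ) ^ 2 := by
    rw [le_div_iff₀ (by positivity), div_mul_eq_mul_div, div_mul_eq_mul_div, div_le_iff₀ hN0]
    calc _ = (d : ℝ) ^ 5 * L := by ring
      _ ≤ _ := hB
  have hNinv2 : N⁻¹ ≤ B / (d : ℝ) ^ 2 := by
    refine le_trans ?_ hNinv
    rw [div_mul_eq_mul_div, inv_eq_one_div]
    gcongr
    nlinarith
  -- the error term `M^(T+1) P^j`
  have herr0 : 0 ≤ ∑ j ∈ Finset.range 10, ((lazyStep G d) ^ (T + 1) * (simpleStep G d) ^ j) v v :=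
    Finset.sum_nonneg fun j _ =>
      mul_nonneg_entries (hM.pow _).nonneg (hP.pow _).nonneg _ _
  have herr1 : ∑ j ∈ Finset.range 10, ((lazyStep G d) ^ (T + 1) * (simpleStep G d) ^ j) v v ≤
      10 * (2 * N⁻¹) := by
    have hb : ∀ x y : V, ((lazyStep G d) ^ T) x y ≤ 2 * N⁻¹ := by
      intro x y
      have h := (abs_le.1 (hmix x y)).2
      have : (N ^ 3)⁻¹ ≤ N⁻¹ := by
        apply inv_anti₀ hN0
        exact le_self_pow₀ hN1 (by norm_num)
      linarith
    have := Finset.sum_le_card_nsmul (Finset.range 10)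
      (fun j => ((lazyStep G d) ^ (T + 1) * (simpleStep G d) ^ j) v v)
      (2 * N⁻¹) (fun j _ => by
        have hc : Commute (lazyStep G d) (simpleStep G d) := by
          rw [lazyStep_eq]
          exact ((Commute.one_left _).add_left (Commute.refl _)).smul_left _
        have hR : SymStoch (lazyStep G d * (simpleStep G d) ^ j) :=
          hM.mul_of_commute (hP.pow j) (hc.pow_right j)
        rw [pow_succ, mul_assoc, Matrix.mul_apply]
        calc _ ≤ ∑ w, 2 * N⁻¹ * (lazyStep G d * (simpleStep G d) ^ j) w v :=
              Finset.sum_le_sum fun w _ =>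
                mul_le_mul_of_nonneg_right (hb _ _) (hR.nonneg _ _)
          _ = 2 * N⁻¹ := by rw [← Finset.mul_sum, hR.col, mul_one])
    simpa using this
  -- the tail
  have htail0 : 0 ≤ ∑ k ∈ Finset.range (T + 1), ((lazyStep G d) ^ k * (simpleStep G d) ^ 10) v v :=
    Finset.sum_nonneg fun j _ =>
      mul_nonneg_entries (hM.pow _).nonneg (hP.pow _).nonneg _ _
  have htail1 := green_tail hP lazyStep_eq hgap hg0 5 (T + 1) v
  rw [show 2 * 5 = 10 by norm_num, ← hNdef] at htail1
  have htail2 : ((T + 1 : ℕ) : ℝ) * N⁻¹ ≤ (6 / c + 3) * (B / (d : ℝ) ^ 2) := by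
    have h1 : ((T + 1 : ℕ) : ℝ) ≤ 6 / c * (L * (d : ℝ) ^ 3) + 3 := by
      push_cast
      have : 6 * L / (c / (d : ℝ) ^ 3) = 6 / c * (L * (d : ℝ) ^ 3) := by
        field_simp
      linarith
    calc _ ≤ (6 / c * (L * (d : ℝ) ^ 3) + 3) * N⁻¹ := by gcongr
      _ = 6 / c * (L / N * (d : ℝ) ^ 3) + 3 * N⁻¹ := by ring
      _ ≤ 6 / c * (B / (d : ℝ) ^ 2) + 3 * (B / (d : ℝ) ^ 2) := by gcongr
      _ = _ := by ring
  have htail3 : 2 / (c / (d : ℝ) ^ 3) * ((simpleStep G d) ^ 10) v v ≤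
      2 / c * (Q / (d : ℝ) ^ 2) := by
    have h := hret 10 le_rfl
    norm_num at h
    have h' : ((simpleStep G d) ^ 10) v v ≤ Q / (d : ℝ) ^ 5 := by
      rwa [le_div_iff₀ (by positivity)]
    calc _ ≤ 2 / (c / (d : ℝ) ^ 3) * (Q / (d : ℝ) ^ 5) := by gcongr
      _ = _ := by field_simp
  have hid := congrFun (congrFun (green_identity (lazyStep_eq (G := G) (d := d)) 10 (T + 1)) v) v
  simp only [Matrix.add_apply, Matrix.sub_apply, Matrix.smul_apply, Matrix.sum_apply,
    smul_eq_mul] at hid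
  rw [hid, hsumP]
  have e : (14 * Q + (6 / c + 3) * B + 2 / c * Q + 40 * B) / (d : ℝ) ^ 2 =
    14 * (Q / (d : ℝ) ^ 2) + (6 / c + 3) * (B / (d : ℝ) ^ 2) + 2 / c * (Q / (d : ℝ) ^ 2)
      + 40 * (B / (d : ℝ) ^ 2) := by ring
  rw [e]
  have hQ0 : 0 ≤ Q / (d : ℝ) ^ 2 := by positivity
  have hB0 : 0 ≤ B / (d : ℝ) ^ 2 := le_trans (by positivity) hNinv2
  have hx1 : 0 ≤ (6 / c + 3) * (B / (d : ℝ) ^ 2) := by positivity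
  have hx2 : 0 ≤ 2 / c * (Q / (d : ℝ) ^ 2) := by positivity
  have e2 : 2 / (d : ℝ) = 2 * (d : ℝ)⁻¹ := by ring
  rw [e2, abs_le]
  constructor <;> linarith

end graph

end Helpers

/-- **Lemma 4(i)**: for a sequence of connected `d`-regular graphs satisfying
P1, P2, P3, the expected number `R_v` of visits to `v` within the mixing time
by the lazy walk started at `v` satisfies `R_v = 2 + 2/d + O(1/d²)`, uniformly
in `v`.  (The `n`-th graph of the sequence has `n + 1` vertices.) -/
theorem expected_returns_estimate
    (G : ∀ n : ℕ, SimpleGraph (Fin (n + 1))) (d : ℕ → ℕ) (ε : ℕ → ℝ)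
    (hreg : ∀ n, (G n).IsRegularOfDegree (d n))
    (hconn : ∀ n, (G n).Connected)
    (hd : Tendsto (fun n => (d n : ℝ)) atTop atTop)
    (hε : ∀ n, 0 < ε n ∧ ε n < 1)
    (hP1 : ∃ c₁ ρ₁ : ℝ, 0 < c₁ ∧ 0 < ρ₁ ∧ ρ₁ ≤ 3 ∧
      ∀ n, SpectralGapLB (G n) (d n) (c₁ / (d n : ℝ) ^ ρ₁))
    (hP2a : Tendsto (fun n : ℕ => Real.log (Real.log ((n : ℝ) + 1)) ^ (2 / ε n) / (d n : ℝ))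
      atTop (nhds 0))
    (hP2b : ∃ c₂ : ℝ, 0 < c₂ ∧ ∀ n, 1 ≤ n →
      (d n : ℝ) ≤ c₂ * (((n : ℝ) + 1) / Real.log ((n : ℝ) + 1)) ^ ((1 : ℝ) / 5))
    (hP3 : ∃ ρ₂ : ℝ, 0 < ρ₂ ∧ ∀ n, PropP3 (G n) (d n) (ε n) ρ₂)
    :
    ∃ C : ℝ, 0 < C ∧ ∃ n₀ : ℕ, ∀ n, n₀ ≤ n → ∀ v : Fin (n + 1),
      |(∑ k ∈ Finset.range (mixingTime (G n) (d n) + 1),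
          ((lazyStep (G n) (d n)) ^ k) v v) - 2 - 2 / (d n : ℝ)| ≤
        C / (d n : ℝ) ^ 2 := by
  obtain ⟨c₁, ρ₁, hc₁, hρ₁, hρ₁3, hgap⟩ := hP1
  obtain ⟨c₂, hc₂, hdn⟩ := hP2b
  obtain ⟨ρ₂, hρ₂, h3⟩ := hP3
  have hc : 0 < min 1 c₁ := lt_min one_pos hc₁
  set c := min 1 c₁ with hcdef
  refine ⟨14 * (1 + ρ₂ * 10) ^ 10 + (6 / c + 3) * c₂ ^ 5 + 2 / c * (1 + ρ₂ * 10) ^ 10 +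
    40 * c₂ ^ 5, by positivity, ?_⟩
  have hN : Tendsto (fun n : ℕ => (n : ℝ) + 1) atTop atTop :=
    tendsto_atTop_add_const_right _ _ tendsto_natCast_atTop_atTop
  have hlog := Real.tendsto_log_atTop.comp hN
  have hloglog := Real.tendsto_log_atTop.comp hlog
  have hev : ∀ᶠ n : ℕ in atTop, 1 ≤ n ∧ (1 : ℝ) ≤ d n ∧ 1 ≤ Real.log ((n : ℝ) + 1) ∧
      4 ≤ Real.log (Real.log ((n : ℝ) + 1)) ∧
      Real.log (Real.log ((n : ℝ) + 1)) ^ (2 / ε n) / (d n : ℝ) < 1 := by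
    filter_upwards [eventually_ge_atTop 1, hd.eventually_ge_atTop 1, hlog.eventually_ge_atTop 1,
      hloglog.eventually_ge_atTop 4, hP2a.eventually_lt_const one_pos] with n h1 h2 h3 h4 h5
    exact ⟨h1, h2, h3, h4, h5⟩
  obtain ⟨n₀, hn₀⟩ := eventually_atTop.1 hev
  refine ⟨n₀, fun n hn v => ?_⟩
  obtain ⟨hn1, hd1, hl1, hll, hlt⟩ := hn₀ n hn
  have hd0 : (0 : ℝ) < d n := by linarith
  obtain ⟨he0, he1⟩ := hε n
  have hcard : (Fintype.card (Fin (n + 1)) : ℝ) = (n : ℝ) + 1 := by simp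
  refine main_estimate (hconn n) (by exact_mod_cast hd1) ?_ hρ₂ (h3 n) ?_ hc (min_le_left _ _)
    (gapLB_of_spectral (hgap n) ?_) ?_ ?_ v
  · intro w
    rw [← hreg n w, ← SimpleGraph.card_neighborFinset_eq_degree]
    congr 1
    ext x
    simp
  · set l := Real.log (Real.log ((n : ℝ) + 1)) with hl
    have h1 : l ^ (2 / ε n) ≤ d n := by
      rw [div_lt_one hd0] at hlt
      exact hlt.le
    have h2 : (l ^ (2 / ε n)) ^ (ε n) ≤ (d n : ℝ) ^ (ε n) :=
      Real.rpow_le_rpow (by positivity) h1 he0.le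
    rw [← Real.rpow_mul (by linarith), div_mul_cancel₀ _ he0.ne'] at h2
    have h4 : l ^ (2 : ℝ) = l ^ 2 := by norm_cast
    rw [h4] at h2
    nlinarith
  · have h1 : (d n : ℝ) ^ ρ₁ ≤ (d n : ℝ) ^ 3 := by
      rw [← Real.rpow_natCast]
      exact Real.rpow_le_rpow_of_exponent_le hd1 (by norm_num; exact hρ₁3)
    have h2 : 0 < (d n : ℝ) ^ ρ₁ := Real.rpow_pos_of_pos hd0 _
    exact div_le_div₀ hc₁.le (min_le_right _ _) h2 h1
  · rw [hcard]; exact hl1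
  · rw [hcard]
    have h := hdn n hn1
    have hx : 0 ≤ ((n : ℝ) + 1) / Real.log ((n : ℝ) + 1) := by positivity
    have h5 : (d n : ℝ) ^ 5 ≤ c₂ ^ 5 * (((n : ℝ) + 1) / Real.log ((n : ℝ) + 1)) := by
      calc (d n : ℝ) ^ 5 ≤ (c₂ * (((n : ℝ) + 1) / Real.log ((n : ℝ) + 1)) ^ ((1 : ℝ) / 5)) ^ 5 :=
            pow_le_pow_left₀ hd0.le h 5
        _ = _ := by
            rw [mul_pow, ← Real.rpow_natCast (_ ^ ((1 : ℝ) / 5)), ← Real.rpow_mul hx]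
            norm_num
    rw [← mul_div_assoc, le_div_iff₀ (by linarith)] at h5
    exact h5

end
end

section
/- Let (G_n) be a sequence of connected d-regular simple graphs on n vertices with d = d(n) → ∞ and ε = ε(n) ∈ (0,1), satisfying properties P1, P2 and P3, and fix a constant K₀ > 0; set L = ⌈K₀·T·log n⌉ where T is the mixing time. Then there exist a constant C and n₀ such that for all n ≥ n₀ and every vertex v: for every starting vertex x at graph distance at least 2 from v, the probability that the lazy walk started at x visits the neighbourhood N(v) within L steps is at most C/d; and for every starting vertex x at graph distance at least 3 from v, this probability is at most C/d². -/
open Finset Filter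

noncomputable section
open scoped Classical

variable {V : Type*} [Fintype V] [DecidableEq V]

section helpers

lemma walkProb_succ (M : Matrix V V ℝ) (u : V) (t : ℕ) (E : (Fin (t + 1 + 1) → V) → Prop) :
    walkProb M u (t + 1) E =
      ∑ w, M u w * walkProb M w t (fun q => E (Fin.cons u q)) := by
  unfold walkProb
  rw [← (Fin.consEquiv (fun _ : Fin (t + 1 + 1) => V)).sum_comp, Fintype.sum_prod_type]
  simp only [Fin.consEquiv, Equiv.coe_fn_mk, Fin.cons_zero]
  rw [Finset.sum_eq_single u]
  · simp_rw [Finset.mul_sum]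
    rw [Finset.sum_comm]
    refine Finset.sum_congr rfl fun q _ => ?_
    rw [Finset.sum_eq_single (q 0)]
    · rw [Fin.prod_univ_succ]
      simp
    · intro b _ hb
      rw [if_neg, mul_zero]
      rintro ⟨h, _⟩
      exact hb h.symm
    · simp
  · intro b _ hb
    refine Finset.sum_eq_zero fun q _ => ?_
    rw [if_neg]
    rintro ⟨h, _⟩
    exact hb h
  · simp

lemma walkProb_le_one (M : Matrix V V ℝ) (hM : ∀ u w, 0 ≤ M u w) (hs : ∀ u, ∑ w, M u w = 1)
    (t : ℕ) : ∀ (u : V) (E : (Fin (t + 1) → V) → Prop), walkProb M u t E ≤ 1 := by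
  induction t with
  | zero =>
    intro u E
    unfold walkProb
    rw [Finset.sum_eq_single (fun _ => u)]
    · split_ifs <;> simp
    · intro p _ hp
      rw [if_neg]
      rintro ⟨h, _⟩
      apply hp
      funext i
      rw [← h]
      congr 1
      exact Fin.fin_one_eq_zero i
    · simp
  | succ t ih =>
    intro u E
    rw [walkProb_succ, ← hs u]
    refine Finset.sum_le_sum fun w _ => ?_
    exact mul_le_of_le_one_right (hM u w) (ih _ _)

lemma walkProb_hit_le (M : Matrix V V ℝ) (hM : ∀ u w, 0 ≤ M u w) (hs : ∀ u, ∑ w, M u w = 1)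
    (S : V → Prop) (f : V → ℝ) (δ : ℝ) (hδ : 0 ≤ δ) (hf : ∀ u, 0 ≤ f u)
    (hS : ∀ u, S u → 1 ≤ f u) (hstep : ∀ u, ∑ w, M u w * f w ≤ f u + δ ∨ 1 ≤ f u)
    (t : ℕ) : ∀ u : V, walkProb M u t (fun p => ∃ s, S (p s)) ≤ f u + t * δ := by
  induction t with
  | zero =>
    intro u
    by_cases h : 1 ≤ f u
    · refine (walkProb_le_one M hM hs _ _ _).trans ?_
      simpa using h
    · have : walkProb M u 0 (fun p => ∃ s, S (p s)) = 0 := by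
        unfold walkProb
        refine Finset.sum_eq_zero fun p _ => ?_
        rw [if_neg]
        rintro ⟨h0, s, hs⟩
        apply h
        apply hS
        rw [← h0]
        rwa [Fin.fin_one_eq_zero s] at hs
      rw [this]
      simpa using hf u
  | succ t ih =>
    intro u
    by_cases h : 1 ≤ f u
    · refine (walkProb_le_one M hM hs _ _ _).trans ?_
      have : 0 ≤ ((t + 1 : ℕ) : ℝ) * δ := by positivity
      linarith
    · have hu : ¬ S u := fun hh => h (hS u hh)
      have h1 := (hstep u).resolve_right h
      rw [walkProb_succ]
      have h2 : ∀ w, M u w * walkProb M w t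
          (fun q => ∃ s, S ((Fin.cons u q : Fin (t + 1 + 1) → V) s)) ≤
          M u w * f w + M u w * (t * δ) := by
        intro w
        rw [← mul_add]
        refine mul_le_mul_of_nonneg_left ?_ (hM u w)
        refine le_trans (le_of_eq ?_) (ih w)
        congr 1
        funext q
        rw [Fin.exists_fin_succ]
        simp [hu]
      refine (Finset.sum_le_sum fun w _ => h2 w).trans ?_
      rw [Finset.sum_add_distrib, ← Finset.sum_mul, hs u]
      push_cast
      linarith

def adjCount (G : SimpleGraph V) (u : V) : ℕ := (univ.filter fun w => G.Adj u w).card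

lemma lazy_nonneg (G : SimpleGraph V) (d : ℕ) (u w : V) : 0 ≤ lazyStep G d u w := by
  unfold lazyStep
  simp only [Matrix.of_apply]
  split_ifs <;> positivity

lemma lazy_mul_sum (G : SimpleGraph V) (d : ℕ) (u : V) (f : V → ℝ) :
    ∑ w, lazyStep G d u w * f w =
      2⁻¹ * f u + 2⁻¹ * ((d : ℝ)⁻¹ * ∑ w ∈ univ.filter (fun w => G.Adj u w), f w) := by
  unfold lazyStep
  simp only [Matrix.of_apply, add_mul, Finset.sum_add_distrib]
  congr 1
  · simp
  · rw [Finset.mul_sum, Finset.mul_sum, Finset.sum_filter]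
    refine Finset.sum_congr rfl fun w _ => ?_
    split_ifs <;> ring

lemma lazy_row (G : SimpleGraph V) (d : ℕ) (hd : 0 < d) (hreg : ∀ u, adjCount G u = d) (u : V) :
    ∑ w, lazyStep G d u w = 1 := by
  have := lazy_mul_sum G d u (fun _ => 1)
  simp only [mul_one] at this
  rw [this]
  have h := hreg u
  unfold adjCount at h
  have hd' : (d : ℝ) ≠ 0 := by positivity
  simp only [Finset.sum_const, h, nsmul_eq_mul]
  field_simp
  norm_num

lemma lazy_symm (G : SimpleGraph V) (d : ℕ) (u w : V) :
    lazyStep G d u w = lazyStep G d w u := by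
  unfold lazyStep
  simp only [Matrix.of_apply, G.adj_comm u w, eq_comm (a := u)]

/-- The averaging operator contracts the l2 norm. -/
lemma avg_sq_le (G : SimpleGraph V) (d : ℕ) (hd : 0 < d) (hreg : ∀ u, adjCount G u = d)
    (x : V → ℝ) :
    ∑ u, ((d : ℝ)⁻¹ * ∑ w ∈ univ.filter (fun w => G.Adj u w), x w) ^ 2 ≤ ∑ u, x u ^ 2 := by
  have hd' : (0 : ℝ) < d := by positivity
  have h1 : ∀ u, ((d : ℝ)⁻¹ * ∑ w ∈ univ.filter (fun w => G.Adj u w), x w) ^ 2 ≤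
      (d : ℝ)⁻¹ * ∑ w ∈ univ.filter (fun w => G.Adj u w), x w ^ 2 := by
    intro u
    have := sq_sum_le_card_mul_sum_sq (s := univ.filter (fun w => G.Adj u w)) (f := x)
    have h := hreg u
    unfold adjCount at h
    rw [h] at this
    rw [mul_pow]
    calc _ ≤ ((d : ℝ)⁻¹) ^ 2 * (d * ∑ w ∈ univ.filter (fun w => G.Adj u w), x w ^ 2) := by
          gcongr
      _ = _ := by field_simp
  refine (Finset.sum_le_sum fun u _ => h1 u).trans ?_
  rw [← Finset.mul_sum]
  simp_rw [Finset.sum_filter]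
  rw [Finset.sum_comm]
  have : ∀ w, ∑ u, (if G.Adj u w then x w ^ 2 else 0) = d * x w ^ 2 := by
    intro w
    rw [← Finset.sum_filter, Finset.sum_const, nsmul_eq_mul]
    have h := hreg w
    unfold adjCount at h
    simp_rw [G.adj_comm w] at h
    rw [h]
  simp_rw [this]
  rw [← Finset.mul_sum, ← mul_assoc, inv_mul_cancel₀ hd'.ne', one_mul]

lemma lazy_contract (G : SimpleGraph V) (d : ℕ) (hd : 0 < d) (hreg : ∀ u, adjCount G u = d)
    (g : ℝ) (hg : SpectralGapLB G d g) (x : V → ℝ) (hx : ∑ v, x v = 0) :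
    ∑ u, (∑ w, lazyStep G d u w * x w) ^ 2 ≤ Real.exp (-g) * ∑ u, x u ^ 2 := by
  have h0 := avg_sq_le G d hd hreg x
  have h1 := hg x hx
  have h2 : ∑ u : V, ∑ v : V, x u * lazyStep G d u v * x v =
      ∑ u, x u * (∑ w, lazyStep G d u w * x w) := by
    refine Finset.sum_congr rfl fun u _ => ?_
    rw [Finset.mul_sum]
    exact Finset.sum_congr rfl fun w _ => by ring
  rw [h2] at h1
  have hn : 0 ≤ ∑ u, x u ^ 2 := Finset.sum_nonneg fun _ _ => sq_nonneg _
  have he : (1 - g) * ∑ u, x u ^ 2 ≤ Real.exp (-g) * ∑ u, x u ^ 2 := by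
    refine mul_le_mul_of_nonneg_right ?_ hn
    have := Real.add_one_le_exp (-g)
    linarith
  refine le_trans ?_ (h1.trans he)
  simp_rw [lazy_mul_sum]
  set y : V → ℝ := fun u => (d : ℝ)⁻¹ * ∑ w ∈ univ.filter (fun w => G.Adj u w), x w with hy
  change ∑ u, y u ^ 2 ≤ _ at h0
  change ∑ u, (2⁻¹ * x u + 2⁻¹ * y u) ^ 2 ≤ ∑ u, x u * (2⁻¹ * x u + 2⁻¹ * y u)
  rw [← sub_nonneg, ← Finset.sum_sub_distrib] at h0 ⊢
  have : ∑ u, (x u * (2⁻¹ * x u + 2⁻¹ * y u) - (2⁻¹ * x u + 2⁻¹ * y u) ^ 2) =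
      4⁻¹ * ∑ u, (x u ^ 2 - y u ^ 2) := by
    rw [Finset.mul_sum]
    exact Finset.sum_congr rfl fun u _ => by ring
  rw [this]
  positivity

lemma lazy_pow_bound (G : SimpleGraph V) (d : ℕ) (hd : 0 < d) (hreg : ∀ u, adjCount G u = d)
    (g : ℝ) (hg : SpectralGapLB G d g) (t : ℕ) (x : V → ℝ) (hx : ∑ v, x v = 0) :
    ∑ u, ((lazyStep G d ^ t).mulVec x) u = 0 ∧
    ∑ u, ((lazyStep G d ^ t).mulVec x u) ^ 2 ≤ Real.exp (-(g * t)) * ∑ u, x u ^ 2 := by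
  induction t with
  | zero => simp [hx]
  | succ t ih =>
    obtain ⟨ih1, ih2⟩ := ih
    rw [pow_succ', ← Matrix.mulVec_mulVec]
    set y := (lazyStep G d ^ t).mulVec x
    constructor
    · simp only [Matrix.mulVec, dotProduct]
      rw [Finset.sum_comm]
      simp_rw [← Finset.sum_mul]
      rw [← ih1]
      refine Finset.sum_congr rfl fun w _ => ?_
      have : ∑ i, lazyStep G d i w = 1 := by
        rw [← lazy_row G d hd hreg w]
        exact Finset.sum_congr rfl fun i _ => lazy_symm G d i w
      rw [this, one_mul]
    · have := lazy_contract G d hd hreg g hg y ih1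
      simp only [Matrix.mulVec, dotProduct]
      refine this.trans ?_
      calc _ ≤ Real.exp (-g) * (Real.exp (-(g * t)) * ∑ u, x u ^ 2) := by gcongr
        _ = _ := by
          rw [← mul_assoc, ← Real.exp_add]
          congr 2
          push_cast
          ring

lemma lazy_pow_row (G : SimpleGraph V) (d : ℕ) (hd : 0 < d) (hreg : ∀ u, adjCount G u = d)
    (t : ℕ) (u : V) : ∑ w, (lazyStep G d ^ t) u w = 1 := by
  induction t generalizing u with
  | zero => simp [Matrix.one_apply]
  | succ t ih =>
    simp_rw [pow_succ', Matrix.mul_apply]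
    rw [Finset.sum_comm]
    simp_rw [← Finset.mul_sum, ih, mul_one]
    exact lazy_row G d hd hreg u

lemma mixing_le (G : SimpleGraph V) (d : ℕ) (hd : 0 < d) (hreg : ∀ u, adjCount G u = d)
    (g : ℝ) (hg : SpectralGapLB G d g) (t : ℕ) (ht1 : 1 ≤ t)
    (hV : 1 ≤ Fintype.card V)
    (ht : 6 * Real.log (Fintype.card V) ≤ g * t) : mixingTime G d ≤ t := by
  refine Nat.sInf_le ⟨ht1, fun x y => ?_⟩
  set N : ℝ := (Fintype.card V : ℝ) with hN
  have hNp : 0 < N := by rw [hN]; exact_mod_cast hV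
  set z : V → ℝ := fun v => (if v = y then 1 else 0) - N⁻¹ with hz
  have hz0 : ∑ v, z v = 0 := by
    simp only [hz, Finset.sum_sub_distrib, Finset.sum_ite_eq', Finset.mem_univ, if_true,
      Finset.sum_const, Finset.card_univ, nsmul_eq_mul, ← hN]
    field_simp
    norm_num
  have hzz : ∑ v, z v ^ 2 ≤ 1 := by
    have : ∀ v, z v ^ 2 = (if v = y then 1 - 2 * N⁻¹ else 0) + N⁻¹ ^ 2 := by
      intro v
      simp only [hz]
      split_ifs <;> ring
    simp_rw [this]
    simp only [Finset.sum_add_distrib, Finset.sum_ite_eq', Finset.mem_univ, if_true,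
      Finset.sum_const, Finset.card_univ, nsmul_eq_mul, ← hN]
    have h1 : N * N⁻¹ ^ 2 = N⁻¹ := by field_simp
    have h2 : 0 < N⁻¹ := by positivity
    linarith
  have hb := (lazy_pow_bound G d hd hreg g hg t z hz0).2
  have hval : (lazyStep G d ^ t).mulVec z x = (lazyStep G d ^ t) x y - N⁻¹ := by
    simp only [Matrix.mulVec, dotProduct, hz, mul_sub, Finset.sum_sub_distrib, ← Finset.sum_mul,
      lazy_pow_row G d hd hreg]
    simp
  rw [← hval]
  apply abs_le_of_sq_le_sq _ (by positivity)
  have h3 : ((lazyStep G d ^ t).mulVec z x) ^ 2 ≤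
      ∑ u, ((lazyStep G d ^ t).mulVec z u) ^ 2 :=
    Finset.single_le_sum (f := fun u => ((lazyStep G d ^ t).mulVec z u) ^ 2)
      (fun _ _ => sq_nonneg _) (Finset.mem_univ x)
  refine h3.trans (hb.trans ?_)
  have h4 : Real.exp (-(g * t)) ≤ Real.exp (-(6 * Real.log N)) := by
    apply Real.exp_le_exp.2
    linarith
  have h5 : Real.exp (-(6 * Real.log N)) = ((N ^ 3)⁻¹) ^ 2 := by
    rw [Real.exp_neg, show (6 : ℝ) * Real.log N = ((6 : ℕ) : ℝ) * Real.log N by norm_num,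
      Real.exp_nat_mul, Real.exp_log hNp, inv_pow]
    ring
  rw [← h5]
  refine le_trans ?_ h4
  exact mul_le_of_le_one_right (Real.exp_pos _).le hzz

def aa (κ : ℝ) (r : ℕ) : ℝ := κ ^ (r - 1) * (r.factorial : ℝ)

lemma aa_nonneg {κ : ℝ} (hκ : 0 ≤ κ) (r : ℕ) : 0 ≤ aa κ r := by unfold aa; positivity

lemma aa_succ (κ : ℝ) (r : ℕ) (hr : 1 ≤ r) : aa κ (r + 1) = κ * (r + 1) * aa κ r := by
  obtain ⟨k, rfl⟩ := Nat.exists_eq_add_of_le' hr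
  unfold aa
  simp only [Nat.add_sub_cancel]
  rw [Nat.factorial_succ (k + 1), pow_succ]
  push_cast
  ring

lemma aa_anti {κ : ℝ} (hκ : 0 ≤ κ) (m : ℕ) (hm : κ * m ≤ 1 / 2) {i j : ℕ} (hij : i ≤ j)
    (hj : j ≤ m) : aa κ j ≤ aa κ i := by
  induction j, hij using Nat.le_induction with
  | base => exact le_rfl
  | succ j hij ih =>
    refine le_trans ?_ (ih (by omega))
    rcases Nat.eq_zero_or_pos j with rfl | hj0
    · simp [aa]
    · rw [aa_succ _ _ hj0]
      have : κ * ((j : ℝ) + 1) ≤ κ * m := by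
        refine mul_le_mul_of_nonneg_left ?_ hκ
        exact_mod_cast hj
      exact mul_le_of_le_one_left (aa_nonneg hκ j) (by linarith)

lemma aa_bound {κ : ℝ} (hκ : 0 ≤ κ) (k : ℕ) : aa κ (k + 1) ≤ (κ * (k + 2)) ^ k := by
  have : ((k + 1).factorial : ℝ) ≤ (k + 2 : ℝ) ^ k := by
    have h : ∀ k : ℕ, (k + 1).factorial ≤ (k + 2) ^ k := by
      intro k
      induction k with
      | zero => simp
      | succ k ih =>
        rw [Nat.factorial_succ, pow_succ']
        refine Nat.mul_le_mul (by omega) (ih.trans ?_)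
        exact Nat.pow_le_pow_left (by omega) _
    exact_mod_cast h k
  unfold aa
  rw [mul_pow, Nat.add_sub_cancel]
  gcongr

lemma hit_bound (G : SimpleGraph V) (hc : G.Connected) (d : ℕ) (hd : 0 < d)
    (hreg : ∀ u, adjCount G u = d) (ε ρ : ℝ) (hρ : 0 < ρ) (hP3 : PropP3 G d ε ρ)
    (k : ℕ) (hk : ((k : ℝ) + 2) ≤ (d : ℝ) ^ ε) (hk2 : 2 * ρ / d * ((k : ℝ) + 2) ≤ 1 / 2)
    (v x : V) (t : ℕ) :
    walkProb (lazyStep G d) x t (fun p => ∃ s, G.Adj v (p s)) ≤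
      aa (2 * ρ / d) (min (G.dist x v) (k + 2)) + t * aa (2 * ρ / d) (k + 1) := by
  set κ : ℝ := 2 * ρ / d with hκd
  have hd' : (0 : ℝ) < d := by positivity
  have hκ : 0 ≤ κ := by positivity
  have hm : κ * ((k + 2 : ℕ) : ℝ) ≤ 1 / 2 := by push_cast; exact hk2
  refine walkProb_hit_le (lazyStep G d) (lazy_nonneg G d) (lazy_row G d hd hreg) (fun u => G.Adj v u)
    (fun u => aa κ (min (G.dist u v) (k + 2))) (aa κ (k + 1)) (aa_nonneg hκ _)
    (fun u => aa_nonneg hκ _) ?_ ?_ t x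
  · intro u hu
    have : G.dist u v = 1 := SimpleGraph.dist_eq_one_iff_adj.2 hu.symm
    simp [this, aa]
  · intro u
    have hcard : (((univ.filter fun w => G.Adj u w).card : ℕ) : ℝ) = d := by
      have := hreg u
      unfold adjCount at this
      exact_mod_cast this
    have htri : ∀ w, G.Adj u w → G.dist u v ≤ G.dist w v + 1 := by
      intro w hw
      have := hc.dist_triangle (u := u) (v := w) (w := v)
      rw [SimpleGraph.dist_eq_one_iff_adj.2 hw] at this
      omega
    rw [lazy_mul_sum]
    set r := G.dist u v with hr
    rcases Nat.lt_or_ge r 2 with h2 | h2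
    · right
      interval_cases r <;> simp [aa]
    left
    rcases Nat.lt_or_ge r (k + 2) with hlt | hge
    · rw [min_eq_left hlt.le]
      have hb := hP3 v u (by
        rw [SimpleGraph.dist_comm, ← hr]
        refine le_trans ?_ hk
        exact_mod_cast hlt.le)
      rw [SimpleGraph.dist_comm, ← hr] at hb
      have hsum : ∑ w ∈ univ.filter (fun w => G.Adj u w), aa κ (min (G.dist w v) (k + 2)) ≤
          (ρ * r) * aa κ (r - 1) + d * aa κ (r + 1) := by
        have h1 : ∀ w ∈ univ.filter (fun w => G.Adj u w), aa κ (min (G.dist w v) (k + 2)) ≤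
            (if G.dist w v ≤ r then aa κ (r - 1) else 0) + aa κ (r + 1) := by
          intro w hw
          rw [Finset.mem_filter] at hw
          have := htri w hw.2
          split_ifs with hle
          · refine le_add_of_le_of_nonneg ?_ (aa_nonneg hκ _)
            exact aa_anti hκ (k + 2) hm (by omega) (by omega)
          · rw [zero_add]
            exact aa_anti hκ (k + 2) hm (by omega) (by omega)
        refine (Finset.sum_le_sum h1).trans ?_
        rw [Finset.sum_add_distrib, Finset.sum_const, nsmul_eq_mul, hcard, ← Finset.sum_filter,
          Finset.filter_filter, Finset.sum_const, nsmul_eq_mul]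
        gcongr
        exact aa_nonneg hκ _
      have e1 : aa κ r = κ * r * aa κ (r - 1) := by
        obtain ⟨j, hj⟩ : ∃ j, r = j + 1 := ⟨r - 1, by omega⟩
        rw [hj, aa_succ κ j (by omega)]
        simp
      have e2 : aa κ (r + 1) ≤ 1 / 2 * aa κ r := by
        rw [aa_succ κ r (by omega)]
        refine mul_le_mul_of_nonneg_right ?_ (aa_nonneg hκ _)
        refine le_trans ?_ hk2
        refine mul_le_mul_of_nonneg_left ?_ hκ
        have : r + 1 ≤ k + 2 := hlt
        exact_mod_cast this
      have e3 : (d : ℝ)⁻¹ * ∑ w ∈ univ.filter (fun w => G.Adj u w), aa κ (min (G.dist w v) (k + 2))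
          ≤ aa κ r := by
        calc _ ≤ (d : ℝ)⁻¹ * ((ρ * r) * aa κ (r - 1) + d * aa κ (r + 1)) := by gcongr
          _ = 1 / 2 * (κ * r * aa κ (r - 1)) + aa κ (r + 1) := by
            rw [hκd]; field_simp
          _ ≤ _ := by rw [← e1]; linarith
      have := aa_nonneg hκ (k + 1)
      linarith
    · have hsum : ∑ w ∈ univ.filter (fun w => G.Adj u w), aa κ (min (G.dist w v) (k + 2)) ≤
          d * aa κ (k + 1) := by
        rw [← hcard, ← nsmul_eq_mul, ← Finset.sum_const]
        refine Finset.sum_le_sum fun w hw => ?_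
        rw [Finset.mem_filter] at hw
        have := htri w hw.2
        exact aa_anti hκ (k + 2) hm (by omega) (by omega)
      have e3 : (d : ℝ)⁻¹ * ∑ w ∈ univ.filter (fun w => G.Adj u w), aa κ (min (G.dist w v) (k + 2))
          ≤ aa κ (k + 1) := by
        rw [inv_mul_le_iff₀ hd']
        exact hsum
      have := aa_nonneg hκ (k + 1)
      have := aa_nonneg hκ (min r (k + 2))
      linarith

end helpers

/-- Numerical estimate: with `k = ⌈20 + 8 Y⌉` the error term is negligible. -/
lemma numeric_delta (ρ D Y ℓ : ℝ) (hρ : 0 < ρ) (hD : 0 < D) (hY : 23 ≤ Y) (hℓ : Real.exp Y = ℓ)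
    (hYD : Y ^ 2 ≤ D) (hD4 : Real.exp 4 ≤ D) (hDρ : (18 * ρ) ^ 4 ≤ D) :
    2 * ρ / D * ((Nat.ceil (20 + 8 * Y) : ℝ) + 2) ≤ 1 / 2 ∧
    (2 * ρ / D * ((Nat.ceil (20 + 8 * Y) : ℝ) + 2)) ^ (Nat.ceil (20 + 8 * Y)) ≤
      (D ^ 5 * ℓ ^ 2)⁻¹ := by
  set k := Nat.ceil (20 + 8 * Y) with hk
  have hk1 : (20 + 8 * Y) ≤ k := Nat.le_ceil _
  have hk2 : (k : ℝ) < 20 + 8 * Y + 1 := Nat.ceil_lt_add_one (by linarith)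
  obtain ⟨s, hs0, hs⟩ : ∃ s : ℝ, 0 < s ∧ s ^ 4 = D := by
    refine ⟨Real.sqrt (Real.sqrt D), by positivity, ?_⟩
    rw [show (4 : ℕ) = 2 * 2 by norm_num, pow_mul, Real.sq_sqrt (by positivity),
      Real.sq_sqrt hD.le]
  have hse : Real.exp 1 ≤ s := by
    apply le_of_pow_le_pow_left₀ (n := 4) (by norm_num) hs0.le
    rw [hs, ← Real.exp_nat_mul]
    norm_num
    exact hD4
  have hs2 : 2 ≤ s := by
    have := Real.add_one_le_exp (1 : ℝ)
    linarith
  have hsρ : 18 * ρ ≤ s := by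
    apply le_of_pow_le_pow_left₀ (n := 4) (by norm_num) hs0.le
    rw [hs]; exact hDρ
  have hYs : Y ≤ s ^ 2 := by
    apply le_of_pow_le_pow_left₀ (n := 2) (by norm_num) (by positivity)
    rw [← pow_mul, hs]; exact hYD
  have hbase : 2 * ρ / D * ((k : ℝ) + 2) ≤ s⁻¹ := by
    rw [← hs, div_mul_eq_mul_div, div_le_iff₀ (by positivity)]
    have e : s⁻¹ * s ^ 4 = s * s ^ 2 := by field_simp
    rw [e]
    calc 2 * ρ * ((k : ℝ) + 2) ≤ 2 * ρ * (9 * Y) := by gcongr; linarith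
      _ = 18 * ρ * Y := by ring
      _ ≤ s * s ^ 2 := by gcongr
  constructor
  · refine hbase.trans ?_
    rw [one_div]
    gcongr
  · calc _ ≤ (s⁻¹) ^ k := by gcongr
      _ = (s ^ k)⁻¹ := inv_pow _ _
      _ ≤ _ := by
        have hℓ0 : 0 < ℓ := hℓ ▸ Real.exp_pos Y
        apply inv_anti₀ (by positivity)
        rw [← Real.rpow_natCast s k]
        have h1 : s ^ (20 + 8 * Y) ≤ s ^ (k : ℝ) :=
          Real.rpow_le_rpow_of_exponent_le (by linarith) hk1
        refine le_trans ?_ h1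
        rw [Real.rpow_add hs0]
        have h2 : s ^ (20 : ℝ) = D ^ 5 := by
          rw [← hs, ← pow_mul, ← Real.rpow_natCast]; norm_num
        rw [h2]
        gcongr
        calc ℓ ^ 2 = Real.exp (2 * Y) := by
              rw [← hℓ, ← Real.exp_nat_mul]; norm_num
          _ ≤ Real.exp (8 * Y) := Real.exp_le_exp.2 (by linarith)
          _ = Real.exp 1 ^ (8 * Y) := by rw [← Real.exp_mul, one_mul]
          _ ≤ s ^ (8 * Y) := by
            apply Real.rpow_le_rpow (Real.exp_pos _).le hse
            linarith

/-- **Lemma 4(ii)**: for a sequence of connected `d`-regular graphs satisfying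
P1, P2, P3 and a constant `K₀ > 0`, with `L = ⌈K₀ · T · log n⌉`: for a start at
distance at least 2 (resp. 3) from `v`, the probability that the lazy walk
visits `N(v)` within `L` steps is `O(1/d)` (resp. `O(1/d²)`). -/
theorem visit_neighbourhood_probability
    (G : ∀ n : ℕ, SimpleGraph (Fin (n + 1))) (d : ℕ → ℕ) (ε : ℕ → ℝ)
    (hreg : ∀ n, (G n).IsRegularOfDegree (d n))
    (hconn : ∀ n, (G n).Connected)
    (hd : Tendsto (fun n => (d n : ℝ)) atTop atTop)
    (hε : ∀ n, 0 < ε n ∧ ε n < 1)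
    (hP1 : ∃ c₁ ρ₁ : ℝ, 0 < c₁ ∧ 0 < ρ₁ ∧ ρ₁ ≤ 3 ∧
      ∀ n, SpectralGapLB (G n) (d n) (c₁ / (d n : ℝ) ^ ρ₁))
    (hP2a : Tendsto (fun n : ℕ => Real.log (Real.log ((n : ℝ) + 1)) ^ (2 / ε n) / (d n : ℝ))
      atTop (nhds 0))
    (hP2b : ∃ c₂ : ℝ, 0 < c₂ ∧ ∀ n, 1 ≤ n →
      (d n : ℝ) ≤ c₂ * (((n : ℝ) + 1) / Real.log ((n : ℝ) + 1)) ^ ((1 : ℝ) / 5))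
    (hP3 : ∃ ρ₂ : ℝ, 0 < ρ₂ ∧ ∀ n, PropP3 (G n) (d n) (ε n) ρ₂)
    (K₀ : ℝ) (hK₀ : 0 < K₀) :
    ∃ C : ℝ, 0 < C ∧ ∃ n₀ : ℕ, ∀ n, n₀ ≤ n → ∀ v x : Fin (n + 1),
      (2 ≤ (G n).dist x v →
        walkProb (lazyStep (G n) (d n)) x
            (Nat.ceil (K₀ * (mixingTime (G n) (d n) : ℝ) * Real.log ((n : ℝ) + 1)))
            (fun p => ∃ s, (G n).Adj v (p s)) ≤ C / (d n : ℝ)) ∧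
      (3 ≤ (G n).dist x v →
        walkProb (lazyStep (G n) (d n)) x
            (Nat.ceil (K₀ * (mixingTime (G n) (d n) : ℝ) * Real.log ((n : ℝ) + 1)))
            (fun p => ∃ s, (G n).Adj v (p s)) ≤ C / (d n : ℝ) ^ 2) := by
  obtain ⟨c₁, ρ₁, hc₁, hρ₁, hρ₁3, hP1⟩ := hP1
  obtain ⟨ρ, hρ, hP3⟩ := hP3
  set B : ℝ := K₀ * (6 / c₁ + 1) + 1 with hB
  have hBpos : 0 < B := by positivity
  refine ⟨4 * ρ + 24 * ρ ^ 2 + B, by positivity, ?_⟩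
  have hlog : Tendsto (fun n : ℕ => Real.log ((n : ℝ) + 1)) atTop atTop :=
    Real.tendsto_log_atTop.comp (tendsto_atTop_add_const_right _ _ tendsto_natCast_atTop_atTop)
  have hloglog : Tendsto (fun n : ℕ => Real.log (Real.log ((n : ℝ) + 1))) atTop atTop :=
    Real.tendsto_log_atTop.comp hlog
  have hev : ∀ᶠ n : ℕ in atTop, 23 ≤ Real.log (Real.log ((n : ℝ) + 1)) ∧
      1 ≤ Real.log ((n : ℝ) + 1) ∧ Real.exp 4 ≤ (d n : ℝ) ∧ (18 * ρ) ^ 4 ≤ (d n : ℝ) ∧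
      Real.log (Real.log ((n : ℝ) + 1)) ^ (2 / ε n) / (d n : ℝ) < 1 := by
    filter_upwards [hloglog.eventually_ge_atTop 23, hlog.eventually_ge_atTop 1,
      hd.eventually_ge_atTop (Real.exp 4), hd.eventually_ge_atTop ((18 * ρ) ^ 4),
      hP2a.eventually_lt_const one_pos] with n h1 h2 h3 h4 h5
    exact ⟨h1, h2, h3, h4, h5⟩
  obtain ⟨n₀, hn₀⟩ := eventually_atTop.1 hev
  refine ⟨n₀, fun n hn v x => ?_⟩
  obtain ⟨hY, hℓ, hd4, hdρ, hYd⟩ := hn₀ n hn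
  obtain ⟨hε0, hε1⟩ := hε n
  set ℓ := Real.log ((n : ℝ) + 1) with hℓd
  set Y := Real.log ℓ with hYdef
  have hDpos : (0 : ℝ) < d n := lt_of_lt_of_le (Real.exp_pos _) hd4
  have hdpos : 0 < d n := by exact_mod_cast hDpos
  have hD1 : (1 : ℝ) ≤ d n := by exact_mod_cast hdpos
  rw [div_lt_one hDpos] at hYd
  have hY1 : 1 ≤ Y := by linarith
  have hY0 : 0 < Y := by linarith
  have hYε : Y ^ 2 ≤ (d n : ℝ) ^ ε n := by
    have := Real.rpow_le_rpow (by positivity) hYd.le hε0.le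
    rwa [← Real.rpow_mul hY0.le, div_mul_cancel₀ _ hε0.ne', Real.rpow_two] at this
  have hYD : Y ^ 2 ≤ d n := by
    refine le_trans ?_ hYd.le
    rw [← Real.rpow_two]
    apply Real.rpow_le_rpow_of_exponent_le hY1
    rw [le_div_iff₀ hε0]
    linarith
  have hexp : Real.exp Y = ℓ := Real.exp_log (by linarith)
  obtain ⟨hk2, hδ⟩ := numeric_delta ρ (d n) Y ℓ hρ hDpos hY hexp hYD hd4 hdρ
  set k := Nat.ceil (20 + 8 * Y) with hk
  have hkε : (k : ℝ) + 2 ≤ (d n : ℝ) ^ ε n := by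
    have : (k : ℝ) < 20 + 8 * Y + 1 := Nat.ceil_lt_add_one (by linarith)
    refine le_trans ?_ hYε
    nlinarith
  have hreg' : ∀ u, adjCount (G n) u = d n := by
    intro u
    have := hreg n u
    rw [← this, ← SimpleGraph.card_neighborFinset_eq_degree]
    unfold adjCount
    congr 1
    ext w
    simp
  -- mixing time
  have hT : (mixingTime (G n) (d n) : ℝ) ≤ (6 / c₁ + 1) * ((d n : ℝ) ^ 3 * ℓ) := by
    set t := Nat.ceil (6 / c₁ * ((d n : ℝ) ^ 3 * ℓ)) with ht
    have ht1 : 6 / c₁ * ((d n : ℝ) ^ 3 * ℓ) ≤ t := Nat.le_ceil _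
    have ht2 : (t : ℝ) < 6 / c₁ * ((d n : ℝ) ^ 3 * ℓ) + 1 := Nat.ceil_lt_add_one (by positivity)
    have h1 : mixingTime (G n) (d n) ≤ t := by
      refine mixing_le (G n) (d n) hdpos hreg' _ (hP1 n) t ?_ (by simp) ?_
      · exact Nat.ceil_pos.2 (by positivity)
      · have e : Real.log (Fintype.card (Fin (n + 1))) = ℓ := by simp [hℓd]
        rw [e]
        have h3 : (d n : ℝ) ^ ρ₁ ≤ (d n : ℝ) ^ 3 := by
          rw [← Real.rpow_natCast]
          exact Real.rpow_le_rpow_of_exponent_le hD1 (by exact_mod_cast hρ₁3)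
        have h4 : 0 < (d n : ℝ) ^ ρ₁ := Real.rpow_pos_of_pos hDpos _
        calc 6 * ℓ = c₁ / (d n : ℝ) ^ 3 * (6 / c₁ * ((d n : ℝ) ^ 3 * ℓ)) := by field_simp
          _ ≤ c₁ / (d n : ℝ) ^ ρ₁ * t := by gcongr
    have h2 : (mixingTime (G n) (d n) : ℝ) ≤ t := by exact_mod_cast h1
    have h5 : 1 ≤ (d n : ℝ) ^ 3 * ℓ := one_le_mul_of_one_le_of_one_le (one_le_pow₀ hD1) hℓ
    linarith
  set L := Nat.ceil (K₀ * (mixingTime (G n) (d n) : ℝ) * ℓ) with hL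
  have hLb : (L : ℝ) ≤ B * ((d n : ℝ) ^ 3 * ℓ ^ 2) := by
    have h1 : (L : ℝ) < K₀ * (mixingTime (G n) (d n) : ℝ) * ℓ + 1 :=
      Nat.ceil_lt_add_one (by positivity)
    have h2 : K₀ * (mixingTime (G n) (d n) : ℝ) * ℓ ≤
        K₀ * ((6 / c₁ + 1) * ((d n : ℝ) ^ 3 * ℓ)) * ℓ := by gcongr
    have h3 : 1 ≤ (d n : ℝ) ^ 3 * ℓ ^ 2 :=
      one_le_mul_of_one_le_of_one_le (one_le_pow₀ hD1) (one_le_pow₀ hℓ)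
    have h4 : B * ((d n : ℝ) ^ 3 * ℓ ^ 2) = K₀ * ((6 / c₁ + 1) * ((d n : ℝ) ^ 3 * ℓ)) * ℓ +
        (d n : ℝ) ^ 3 * ℓ ^ 2 := by rw [hB]; ring
    linarith
  have hκ : 0 ≤ 2 * ρ / (d n : ℝ) := by positivity
  have herr : (L : ℝ) * aa (2 * ρ / (d n : ℝ)) (k + 1) ≤ B / (d n : ℝ) ^ 2 := by
    have h1 := (aa_bound hκ k).trans hδ
    have h0 := aa_nonneg hκ (k + 1)
    calc _ ≤ B * ((d n : ℝ) ^ 3 * ℓ ^ 2) * ((d n : ℝ) ^ 5 * ℓ ^ 2)⁻¹ := by gcongr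
      _ = _ := by field_simp
  have hhit := hit_bound (G n) (hconn n) (d n) hdpos hreg' (ε n) ρ hρ (hP3 n) k hkε hk2 v x L
  have hm : 2 * ρ / (d n : ℝ) * ((k + 2 : ℕ) : ℝ) ≤ 1 / 2 := by push_cast; exact hk2
  have hk20 : 20 ≤ k := by
    have : (20 + 8 * Y) ≤ k := Nat.le_ceil _
    have : (20 : ℝ) ≤ k := by linarith
    exact_mod_cast this
  constructor
  · intro h2
    have h3 : aa (2 * ρ / (d n : ℝ)) (min ((G n).dist x v) (k + 2)) ≤ 4 * ρ / d n := by
      refine (aa_anti hκ (k + 2) hm (i := 2) (by omega) (by omega)).trans (le_of_eq ?_)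
      simp [aa, Nat.factorial]
      ring
    have h4 : B / (d n : ℝ) ^ 2 ≤ B / d n := by
      gcongr
      nlinarith
    have h5 : (4 * ρ + 24 * ρ ^ 2 + B) / (d n : ℝ) =
      4 * ρ / d n + 24 * ρ ^ 2 / d n + B / d n := by ring
    have h6 : 0 ≤ 24 * ρ ^ 2 / (d n : ℝ) := by positivity
    rw [h5]
    linarith
  · intro h2
    have h3 : aa (2 * ρ / (d n : ℝ)) (min ((G n).dist x v) (k + 2)) ≤ 24 * ρ ^ 2 / (d n : ℝ) ^ 2 := by
      refine (aa_anti hκ (k + 2) hm (i := 3) (by omega) (by omega)).trans (le_of_eq ?_)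
      simp [aa, Nat.factorial]
      ring
    have h5 : (4 * ρ + 24 * ρ ^ 2 + B) / (d n : ℝ) ^ 2 =
      4 * ρ / (d n : ℝ) ^ 2 + 24 * ρ ^ 2 / (d n : ℝ) ^ 2 + B / (d n : ℝ) ^ 2 := by ring
    have h6 : 0 ≤ 4 * ρ / (d n : ℝ) ^ 2 := by positivity
    rw [h5]
    linarith

end
end
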